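/- Fix positive integers c and n. Let N_rect(x₁,…,xₙ) denote, for positive integers x₁,…,xₙ with d = x₁+⋯+xₙ, the sum of mult(γ) over all λ-increasing lattice paths γ from (0,d) to (c,0) with n+c+1 steps contained in the rectangle Δ of width c and height d equipped with boundary data μ₁ = (c), μ₂ = (1,…,1) (c parts equal to 1), ν₁ = (x₁,…,xₙ), ν₂ = (d). Then there exists a single polynomial P ∈ ℚ[X₁,…,Xₙ] such that N_rect(x₁,…,xₙ) = P(x₁,…,xₙ) for all positive integers x₁,…,xₙ satisfying Σ_{i∈I} xᵢ ≠ Σ_{j∈J} xⱼ for every pair of distinct subsets I, J ⊆ {1,…,n}. -/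

import Mathlib

open Classical

noncomputable section

namespace TropPaths

/-- Lattice points of the plane. -/
abbrev Pt := ℤ × ℤ

/-- The order on `ℤ²` induced by `λ(x,y) = x - εy` for a small irrational `ε > 0`:
`p ≺ q` iff `p₁ < q₁`, or (`p₁ = q₁` and `p₂ > q₂`). -/
def lamLT (p q : Pt) : Prop := p.1 < q.1 ∨ (p.1 = q.1 ∧ q.2 < p.2)

/-- A lattice path, recorded as the list of its points, is `λ`-increasing. -/
def Increasing (γ : List Pt) : Prop := List.Chain' lamLT γ

/-- The determinant of two vectors in `ℤ²`. -/
def det (u v : Pt) : ℤ := u.1 * v.2 - u.2 * v.1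

/-- The `k`-th point of a path (junk value out of range). -/
def pt (γ : List Pt) (k : ℕ) : Pt := γ.getD k (0, 0)

/-- The `k`-th step vector of a path. -/
def stepAt (γ : List Pt) (k : ℕ) : Pt := pt γ (k + 1) - pt γ k

/-- The list of all step vectors of a path. -/
def steps (γ : List Pt) : List Pt := List.zipWith (fun a b => b - a) γ γ.tail

/-- The multiset of down steps `(0,-s)`, `s > 0`, of a path. -/
def downSteps (γ : List Pt) : Multiset Pt :=
  Multiset.filter (fun v => v.1 = 0 ∧ v.2 < 0) (steps γ : Multiset Pt)

/-- The multiset of up-right steps of a path. -/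
def upRightSteps (γ : List Pt) : Multiset Pt :=
  Multiset.filter (fun v => 0 < v.1 ∧ 0 < v.2) (steps γ : Multiset Pt)

/-- The path makes a turn of sign `s` at the (interior) index `k`; for left turns
`s = (0 < ·)`, for right turns `s = (· < 0)`. -/
def TurnAt (s : ℤ → Prop) (γ : List Pt) (k : ℕ) : Prop :=
  0 < k ∧ k + 1 < γ.length ∧ s (det (pt γ k - pt γ (k - 1)) (pt γ (k + 1) - pt γ k))

/-- `k` is the first turn of sign `s` of the path. -/
def FirstTurn (s : ℤ → Prop) (γ : List Pt) (k : ℕ) : Prop :=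
  TurnAt s γ k ∧ ∀ j, TurnAt s γ j → k ≤ j

/-- Twice the area of the triangle with vertices `γ(k-1), γ(k), γ(k+1)`. -/
def triArea2 (γ : List Pt) (k : ℕ) : ℕ :=
  (det (pt γ k - pt γ (k - 1)) (pt γ (k + 1) - pt γ k)).natAbs

/-- The path obtained by cutting the corner at index `k`, i.e. deleting the point `γ(k)`. -/
def cut (γ : List Pt) (k : ℕ) : List Pt := γ.eraseIdx k

/-- The path obtained by completing the parallelogram at index `k`, i.e. replacing
`γ(k)` by `γ(k-1) + γ(k+1) - γ(k)`. -/
def push (γ : List Pt) (k : ℕ) : List Pt :=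
  γ.set k (pt γ (k - 1) + pt γ (k + 1) - pt γ k)

/-- All points of the path lie in `Δ`. -/
def Inside (Δ : Set Pt) (γ : List Pt) : Prop := ∀ z ∈ γ, z ∈ Δ

/-- Mikhalkin's multiplicity recursion, as a functional relation: `MultRel Δ Init s γ m`
means that the recursion (performed always at the *first* turn of sign `s`) assigns the
multiplicity `m` to the path `γ`.  Here `Δ` is the set of lattice points of the polygon,
`Init` the set of initial paths (of multiplicity `1`), and `s` the turn sign
(`0 < ·` for left turns / `mult₊`, `· < 0` for right turns / `mult₋`). -/
inductive MultRel (Δ : Set Pt) (Init : List Pt → Prop) (s : ℤ → Prop) : List Pt → ℕ → Prop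
  | init {γ : List Pt} : Init γ → MultRel Δ Init s γ 1
  | noTurn {γ : List Pt} : ¬Init γ → (∀ k, ¬TurnAt s γ k) → MultRel Δ Init s γ 0
  | stepIn {γ : List Pt} {k m' m'' : ℕ} : ¬Init γ → FirstTurn s γ k →
      Inside Δ (push γ k) → MultRel Δ Init s (cut γ k) m' →
      MultRel Δ Init s (push γ k) m'' →
      MultRel Δ Init s γ (triArea2 γ k * m' + m'')
  | stepOut {γ : List Pt} {k m' : ℕ} : ¬Init γ → FirstTurn s γ k →
      ¬Inside Δ (push γ k) → MultRel Δ Init s (cut γ k) m' →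
      MultRel Δ Init s γ (triArea2 γ k * m')

/-- The multiplicity function determined by Mikhalkin's recursion. -/
def multOf (Δ : Set Pt) (Init : List Pt → Prop) (s : ℤ → Prop) (γ : List Pt) : ℕ :=
  if h : ∃ m, MultRel Δ Init s γ m then h.choose else 0

/-- `γ ≺ δ`: the path `δ` is obtained from `γ` by finitely many steps of the multiplicity
recursion (each step cuts the corner at the first turn of sign `s`, or completes the
parallelogram there). -/
inductive Reaches (Δ : Set Pt) (Init : List Pt → Prop) (s : ℤ → Prop) : List Pt → List Pt → Prop
  | refl (γ : List Pt) : Reaches Δ Init s γ γ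
  | cutStep {γ δ : List Pt} {k : ℕ} : ¬Init γ → FirstTurn s γ k →
      Reaches Δ Init s (cut γ k) δ → Reaches Δ Init s γ δ
  | pushStep {γ δ : List Pt} {k : ℕ} : ¬Init γ → FirstTurn s γ k →
      Inside Δ (push γ k) → Reaches Δ Init s (push γ k) δ → Reaches Δ Init s γ δ

/-- The lattice path starting at `p` with the given list of step vectors. -/
def pathFrom : Pt → List Pt → List Pt
  | p, [] => [p]
  | p, v :: vs => p :: pathFrom (p + v) vs

/-- Horizontal (rightward) steps of the given sizes. -/
def hSteps (l : List ℕ) : List Pt := l.map fun k => ((k : ℤ), 0)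

/-- Vertical downward steps of the given sizes. -/
def dSteps (l : List ℕ) : List Pt := l.map fun k => ((0 : ℤ), -(k : ℤ))

/-- A multiset of positive integers is a partition of `t`. -/
def IsPartition (m : Multiset ℕ) (t : ℕ) : Prop := (∀ k ∈ m, 0 < k) ∧ m.sum = t

/-! ## The rectangle `[0,c] × [0,d]` -/

/-- The lattice points of the rectangle with vertices `(0,0), (c,0), (0,d), (c,d)`. -/
def rect (c d : ℕ) : Set Pt := {z | 0 ≤ z.1 ∧ z.1 ≤ (c : ℤ) ∧ 0 ≤ z.2 ∧ z.2 ≤ (d : ℤ)}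

/-- `β₊`-initial paths of the rectangle: from `p = (0,d)` clockwise along the top edge with
step sizes the parts of `μ₂` and then down the right edge with step sizes the parts of `ν₂`. -/
def InitPlusRect (d : ℕ) (μ₂ ν₂ : Multiset ℕ) (γ : List Pt) : Prop :=
  ∃ s t : List ℕ, (s : Multiset ℕ) = μ₂ ∧ (t : Multiset ℕ) = ν₂ ∧
    γ = pathFrom (0, (d : ℤ)) (hSteps s ++ dSteps t)

/-- `β₋`-initial paths of the rectangle: from `p = (0,d)` counterclockwise down the left edge
with step sizes the parts of `ν₁` and then along the bottom edge with step sizes the parts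
of `μ₁`. -/
def InitMinusRect (d : ℕ) (μ₁ ν₁ : Multiset ℕ) (γ : List Pt) : Prop :=
  ∃ s t : List ℕ, (s : Multiset ℕ) = ν₁ ∧ (t : Multiset ℕ) = μ₁ ∧
    γ = pathFrom (0, (d : ℤ)) (dSteps s ++ hSteps t)

/-- `mult₊` for the rectangle with boundary data `(μ₁, μ₂, ν₁, ν₂)`. -/
def multPlusRect (c d : ℕ) (μ₂ ν₂ : Multiset ℕ) : List Pt → ℕ :=
  multOf (rect c d) (InitPlusRect d μ₂ ν₂) (fun x => 0 < x)

/-- `mult₋` for the rectangle with boundary data `(μ₁, μ₂, ν₁, ν₂)`. -/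
def multMinusRect (c d : ℕ) (μ₁ ν₁ : Multiset ℕ) : List Pt → ℕ :=
  multOf (rect c d) (InitMinusRect d μ₁ ν₁) (fun x => x < 0)

/-- `mult = mult₊ · mult₋` for the rectangle with boundary data `(μ₁, μ₂, ν₁, ν₂)`. -/
def multRect (c d : ℕ) (μ₁ μ₂ ν₁ ν₂ : Multiset ℕ) (γ : List Pt) : ℕ :=
  multPlusRect c d μ₂ ν₂ γ * multMinusRect c d μ₁ ν₁ γ

/-- A `λ`-increasing lattice path from `(0,d)` to `(c,0)` contained in the rectangle. -/
def IsPathRect (c d : ℕ) (γ : List Pt) : Prop :=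
  Increasing γ ∧ γ.head? = some (0, (d : ℤ)) ∧ γ.getLast? = some ((c : ℤ), 0) ∧
    Inside (rect c d) γ

/-- The genericity condition: all subset sums of the `xᵢ` are distinct. -/
def Generic {n : ℕ} (x : Fin n → ℕ) : Prop :=
  ∀ I J : Finset (Fin n), I ≠ J → ∑ i ∈ I, x i ≠ ∑ j ∈ J, x j


/-! ## Part 1: paths in terms of step lists -/

lemma pathFrom_append (p : Pt) (S : List Pt) (v : Pt) (T : List Pt) :
    pathFrom p (S ++ v :: T) = pathFrom p S ++ pathFrom (p + S.sum + v) T := by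
  induction S generalizing p with
  | nil => simp [pathFrom]
  | cons a S ih =>
    simp only [List.cons_append, pathFrom, List.sum_cons]
    rw [ih]
    simp only [List.append_cancel_left_eq, List.cons.injEq, true_and]
    congr 1
    abel

lemma length_pathFrom (p : Pt) (S : List Pt) : (pathFrom p S).length = S.length + 1 := by
  induction S generalizing p with
  | nil => rfl
  | cons a S ih => simp [pathFrom, ih]

lemma pathFrom_mid (p : Pt) (S : List Pt) (u v : Pt) (T : List Pt) :
    pathFrom p (S ++ u :: v :: T) =
      pathFrom p S ++ (p + S.sum + u) :: pathFrom (p + S.sum + u + v) T := by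
  rw [pathFrom_append]; rfl

lemma pathFrom_last (p : Pt) (S : List Pt) : ∃ L, pathFrom p S = L ++ [p + S.sum] := by
  induction S generalizing p with
  | nil => exact ⟨[], by simp [pathFrom]⟩
  | cons a S ih =>
    obtain ⟨L, hL⟩ := ih (p + a)
    refine ⟨p :: L, ?_⟩
    simp [pathFrom, hL, add_assoc]

lemma pathFrom_head (p : Pt) (S : List Pt) : ∃ L, pathFrom p S = p :: L := by
  cases S with
  | nil => exact ⟨[], rfl⟩
  | cons a S => exact ⟨_, rfl⟩

lemma pathFrom_inj (p : Pt) : ∀ S T : List Pt, pathFrom p S = pathFrom p T → S = T := by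
  intro S
  induction S generalizing p with
  | nil =>
    intro T h
    cases T with
    | nil => rfl
    | cons b T =>
      have := congrArg List.length h
      simp [length_pathFrom] at this
  | cons a S ih =>
    intro T h
    cases T with
    | nil =>
      have := congrArg List.length h
      simp [length_pathFrom] at this
    | cons b T =>
      simp only [pathFrom, List.cons.injEq, true_and] at h
      have hab : a = b := by
        obtain ⟨L, hL⟩ := pathFrom_head (p + a) S
        obtain ⟨L', hL'⟩ := pathFrom_head (p + b) T
        rw [hL, hL'] at h
        simpa using (List.cons.inj h).1
      subst hab
      rw [ih _ _ h]

lemma cut_pathFrom (p : Pt) (S : List Pt) (u v : Pt) (T : List Pt) :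
    cut (pathFrom p (S ++ u :: v :: T)) (S.length + 1) = pathFrom p (S ++ (u + v) :: T) := by
  rw [pathFrom_mid, pathFrom_append, cut, ← length_pathFrom p S,
    List.eraseIdx_append_of_length_le le_rfl]
  simp [add_assoc]

lemma pt_trip (p : Pt) (S : List Pt) (u v : Pt) (T : List Pt) :
    pt (pathFrom p (S ++ u :: v :: T)) S.length = p + S.sum ∧
    pt (pathFrom p (S ++ u :: v :: T)) (S.length + 1) = p + S.sum + u ∧
    pt (pathFrom p (S ++ u :: v :: T)) (S.length + 1 + 1) = p + S.sum + u + v := by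
  rw [pathFrom_mid]
  obtain ⟨L, hL⟩ := pathFrom_last p S
  obtain ⟨R, hR⟩ := pathFrom_head (p + S.sum + u + v) T
  have hlen := length_pathFrom p S
  rw [hL] at hlen
  have hL' : S.length = L.length := by simpa using hlen.symm
  rw [hL, hR, hL']
  refine ⟨?_, ?_, ?_⟩
  · simp [pt]
  · simp [pt]
  · simp [pt, add_assoc]

lemma push_pathFrom (p : Pt) (S : List Pt) (u v : Pt) (T : List Pt) :
    push (pathFrom p (S ++ u :: v :: T)) (S.length + 1) = pathFrom p (S ++ v :: u :: T) := by
  obtain ⟨h1, h2, h3⟩ := pt_trip p S u v T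
  rw [push, Nat.add_sub_cancel, h1, h2, h3]
  rw [pathFrom_mid, pathFrom_mid, ← length_pathFrom p S, List.set_append_right _ _ le_rfl]
  simp only [Nat.sub_self, List.set_cons_zero]
  have e1 : p + S.sum + (p + S.sum + u + v) - (p + S.sum + u) = p + S.sum + v := by abel
  have e2 : p + S.sum + u + v = p + S.sum + v + u := by abel
  rw [e1, e2]

lemma turnAt_iff (s : ℤ → Prop) (p : Pt) (σ : List Pt) (k : ℕ) :
    TurnAt s (pathFrom p σ) k ↔
      ∃ S u v T, σ = S ++ u :: v :: T ∧ k = S.length + 1 ∧ s (det u v) := by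
  constructor
  · rintro ⟨h0, h1, h2⟩
    rw [length_pathFrom] at h1
    obtain ⟨k, rfl⟩ : ∃ j, k = j + 1 := ⟨k - 1, by omega⟩
    have hσ : σ = σ.take k ++ σ[k] :: σ[k+1] :: σ.drop (k + 2) := by
      rw [← List.drop_eq_getElem_cons, ← List.drop_eq_getElem_cons, List.take_append_drop]
    have hl : (σ.take k).length = k := by rw [List.length_take]; omega
    refine ⟨σ.take k, σ[k], σ[k+1], σ.drop (k+2), hσ, by rw [hl], ?_⟩
    obtain ⟨e1, e2, e3⟩ := pt_trip p (σ.take k) σ[k] σ[k+1] (σ.drop (k+2))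
    rw [← hσ, hl] at e1 e2 e3
    rw [Nat.add_sub_cancel, e1, e2, e3] at h2
    simpa using h2
  · rintro ⟨S, u, v, T, rfl, rfl, h⟩
    obtain ⟨e1, e2, e3⟩ := pt_trip p S u v T
    refine ⟨by omega, ?_, ?_⟩
    · rw [length_pathFrom]; simp
    · rw [Nat.add_sub_cancel, e1, e2, e3]; simpa using h

lemma triArea2_pathFrom (p : Pt) (S : List Pt) (u v : Pt) (T : List Pt) :
    triArea2 (pathFrom p (S ++ u :: v :: T)) (S.length + 1) = (det u v).natAbs := by
  obtain ⟨e1, e2, e3⟩ := pt_trip p S u v T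
  rw [triArea2, Nat.add_sub_cancel, e1, e2, e3]; simp

/-- No turn of sign `s` in a list of steps. -/
def NT (s : ℤ → Prop) (σ : List Pt) : Prop :=
  ∀ S u v T, σ = S ++ u :: v :: T → ¬ s (det u v)

lemma NT.pre {s : ℤ → Prop} {σ τ : List Pt} (h : NT s (σ ++ τ)) : NT s σ := by
  intro S u v T e
  exact h S u v (T ++ τ) (by rw [e]; simp)

/-- The recursion in terms of step lists. -/
inductive SRel (Δ : Set Pt) (Init : List Pt → Prop) (s : ℤ → Prop) (p : Pt) :
    List Pt → ℕ → Prop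
  | init {σ : List Pt} : Init (pathFrom p σ) → SRel Δ Init s p σ 1
  | noTurn {σ : List Pt} : ¬Init (pathFrom p σ) → NT s σ → SRel Δ Init s p σ 0
  | stepIn {S : List Pt} {u v : Pt} {T : List Pt} {m' m'' : ℕ} :
      ¬Init (pathFrom p (S ++ u :: v :: T)) → NT s (S ++ [u]) → s (det u v) →
      Inside Δ (pathFrom p (S ++ v :: u :: T)) → SRel Δ Init s p (S ++ (u + v) :: T) m' →
      SRel Δ Init s p (S ++ v :: u :: T) m'' →
      SRel Δ Init s p (S ++ u :: v :: T) ((det u v).natAbs * m' + m'')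
  | stepOut {S : List Pt} {u v : Pt} {T : List Pt} {m' : ℕ} :
      ¬Init (pathFrom p (S ++ u :: v :: T)) → NT s (S ++ [u]) → s (det u v) →
      ¬Inside Δ (pathFrom p (S ++ v :: u :: T)) → SRel Δ Init s p (S ++ (u + v) :: T) m' →
      SRel Δ Init s p (S ++ u :: v :: T) ((det u v).natAbs * m')

lemma firstTurn_iff (s : ℤ → Prop) (p : Pt) (σ : List Pt) (k : ℕ) :
    FirstTurn s (pathFrom p σ) k ↔
      ∃ S u v T, σ = S ++ u :: v :: T ∧ k = S.length + 1 ∧ s (det u v) ∧ NT s (S ++ [u]) := by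
  constructor
  · rintro ⟨h, hm⟩
    obtain ⟨S, u, v, T, e, hk, hs⟩ := (turnAt_iff s p σ k).1 h
    refine ⟨S, u, v, T, e, hk, hs, ?_⟩
    intro S' u' v' T' e' hs'
    have := hm (S'.length + 1) ((turnAt_iff s p σ _).2 ⟨S', u', v', T' ++ v :: T, ?_, rfl, hs'⟩)
    · have hl := congrArg List.length e'
      simp at hl
      omega
    · rw [e]
      calc S ++ u :: v :: T = (S ++ [u]) ++ v :: T := by simp
        _ = _ := by rw [e']; simp
  · rintro ⟨S, u, v, T, e, hk, hs, hn⟩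
    refine ⟨(turnAt_iff s p σ k).2 ⟨S, u, v, T, e, hk, hs⟩, ?_⟩
    intro j hj
    obtain ⟨S', u', v', T', e', hj', hs'⟩ := (turnAt_iff s p σ j).1 hj
    by_contra hlt
    push Not at hlt
    have hle : S'.length + 2 ≤ (S ++ [u]).length := by simp; omega
    have : S' ++ [u', v'] <+: S ++ [u] := by
      apply List.prefix_of_prefix_length_le (l₃ := σ)
      · exact ⟨T', by rw [e']; simp⟩
      · exact ⟨v :: T, by rw [e]; simp⟩
      · simpa using hle
    obtain ⟨R, hR⟩ := this
    exact hn S' u' v' R (by rw [← hR]; simp) hs'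

lemma SRel_of_MultRel {Δ : Set Pt} {Init : List Pt → Prop} {s : ℤ → Prop} {p : Pt}
    {γ : List Pt} {m : ℕ} (h : MultRel Δ Init s γ m) :
    ∀ σ, γ = pathFrom p σ → SRel Δ Init s p σ m := by
  induction h with
  | init h => rintro σ rfl; exact .init h
  | noTurn h h' =>
    rintro σ rfl
    refine .noTurn h ?_
    intro S u v T e hs
    exact h' _ ((turnAt_iff _ _ _ _).2 ⟨S, u, v, T, e, rfl, hs⟩)
  | stepIn h hk hin _ _ ih1 ih2 =>
    rintro σ rfl
    obtain ⟨S, u, v, T, rfl, rfl, hs, hn⟩ := (firstTurn_iff _ _ _ _).1 hk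
    rw [triArea2_pathFrom]
    rw [push_pathFrom] at hin
    exact .stepIn h hn hs hin (ih1 _ (cut_pathFrom _ _ _ _ _)) (ih2 _ (push_pathFrom _ _ _ _ _))
  | stepOut h hk hin _ ih1 =>
    rintro σ rfl
    obtain ⟨S, u, v, T, rfl, rfl, hs, hn⟩ := (firstTurn_iff _ _ _ _).1 hk
    rw [triArea2_pathFrom]
    rw [push_pathFrom] at hin
    exact .stepOut h hn hs hin (ih1 _ (cut_pathFrom _ _ _ _ _))

lemma MultRel_of_SRel {Δ : Set Pt} {Init : List Pt → Prop} {s : ℤ → Prop} {p : Pt}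
    {σ : List Pt} {m : ℕ} (h : SRel Δ Init s p σ m) : MultRel Δ Init s (pathFrom p σ) m := by
  induction h with
  | init h => exact .init h
  | noTurn h h' =>
    refine .noTurn h ?_
    intro k hk
    obtain ⟨S, u, v, T, e, rfl, hs⟩ := (turnAt_iff _ _ _ _).1 hk
    exact h' _ _ _ _ e hs
  | @stepIn S u v T m' m'' h hn hs hin _ _ ih1 ih2 =>
    rw [← triArea2_pathFrom p S u v T]
    refine .stepIn h ((firstTurn_iff _ _ _ _).2 ⟨S, u, v, T, rfl, rfl, hs, hn⟩) ?_ ?_ ?_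
    · rwa [push_pathFrom]
    · rwa [cut_pathFrom]
    · rwa [push_pathFrom]
  | @stepOut S u v T m' h hn hs hin _ ih1 =>
    rw [← triArea2_pathFrom p S u v T]
    refine .stepOut h ((firstTurn_iff _ _ _ _).2 ⟨S, u, v, T, rfl, rfl, hs, hn⟩) ?_ ?_
    · rwa [push_pathFrom]
    · rwa [cut_pathFrom]

lemma mem_pathFrom (p z : Pt) (σ : List Pt) :
    z ∈ pathFrom p σ ↔ ∃ S T, σ = S ++ T ∧ z = p + S.sum := by
  induction σ generalizing p with
  | nil => simp [pathFrom]
  | cons a σ ih =>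
    simp only [pathFrom, List.mem_cons, ih]
    constructor
    · rintro (rfl | ⟨S, T, rfl, rfl⟩)
      · exact ⟨[], a :: σ, rfl, by simp⟩
      · exact ⟨a :: S, T, rfl, by simp [add_assoc]⟩
    · rintro ⟨S, T, e, rfl⟩
      cases S with
      | nil => left; simp
      | cons b S =>
        simp only [List.cons_append, List.cons.injEq] at e
        right
        exact ⟨S, T, e.2, by simp [e.1, add_assoc]⟩

lemma inside_iff {Δ : Set Pt} {p : Pt} {σ : List Pt} :
    Inside Δ (pathFrom p σ) ↔ ∀ S T, σ = S ++ T → p + S.sum ∈ Δ := by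
  unfold Inside
  constructor
  · intro h S T e
    exact h _ ((mem_pathFrom _ _ _).2 ⟨S, T, e, rfl⟩)
  · intro h z hz
    obtain ⟨S, T, e, rfl⟩ := (mem_pathFrom _ _ _).1 hz
    exact h S T e

lemma inside_cut {Δ : Set Pt} {p : Pt} {S : List Pt} {u v : Pt} {T : List Pt}
    (h : Inside Δ (pathFrom p (S ++ u :: v :: T))) :
    Inside Δ (pathFrom p (S ++ (u + v) :: T)) := by
  rw [pathFrom_mid] at h
  rw [pathFrom_append]
  intro z hz
  apply h
  simp only [List.mem_append, List.mem_cons] at hz ⊢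
  rw [← add_assoc] at hz
  tauto

lemma inside_push {Δ : Set Pt} {p : Pt} {S : List Pt} {u v : Pt} {T : List Pt}
    (h : Inside Δ (pathFrom p (S ++ u :: v :: T))) (h' : p + S.sum + v ∈ Δ) :
    Inside Δ (pathFrom p (S ++ v :: u :: T)) := by
  rw [pathFrom_mid] at h ⊢
  have e2 : p + S.sum + v + u = p + S.sum + u + v := by abel
  rw [e2]
  intro z hz
  simp only [List.mem_append, List.mem_cons] at hz
  rcases hz with hz | rfl | hz
  · exact h _ (by simp [hz])
  · exact h'
  · exact h _ (by simp [hz])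

/-- Signed area functional. -/
def sh (p : Pt) : List Pt → ℤ
  | [] => 0
  | v :: σ => det p v + sh (p + v) σ

lemma sh_append (p : Pt) (S T : List Pt) : sh p (S ++ T) = sh p S + sh (p + S.sum) T := by
  induction S generalizing p with
  | nil => simp [sh]
  | cons a S ih => simp [sh, ih, add_assoc]

lemma sh_swap (p : Pt) (S : List Pt) (u v : Pt) (T : List Pt) :
    sh p (S ++ u :: v :: T) - sh p (S ++ v :: u :: T) = 2 * det u v := by
  rw [sh_append, sh_append]
  simp only [sh]
  have e2 : p + S.sum + v + u = p + S.sum + u + v := by abel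
  rw [e2]
  simp only [det, Prod.fst_add, Prod.snd_add]
  ring

lemma abs_sh_le {c d : ℕ} (p : Pt) (σ : List Pt) (h : Inside (rect c d) (pathFrom p σ)) :
    |sh p σ| ≤ σ.length * (2 * (c * d)) := by
  induction σ generalizing p with
  | nil => simp [sh]
  | cons a σ ih =>
    have h1 := ih (p + a) (fun z hz => h z (by simp [pathFrom, hz]))
    have hp : p ∈ rect c d := h p (by simp [pathFrom])
    have hq : p + a ∈ rect c d := by
      obtain ⟨L, hL⟩ := pathFrom_head (p + a) σ
      exact h _ (by simp [pathFrom, hL])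
    obtain ⟨a1, a2, a3, a4⟩ := hp
    obtain ⟨b1, b2, b3, b4⟩ := hq
    have e : det p a = p.1 * (p + a).2 - p.2 * (p + a).1 := by
      simp only [det, Prod.fst_add, Prod.snd_add]; ring
    have k1 : p.1 * (p + a).2 ≤ c * d := mul_le_mul a2 b4 b3 (by positivity)
    have k2 : p.2 * (p + a).1 ≤ d * c := mul_le_mul a4 b2 b1 (by positivity)
    have k3 : 0 ≤ p.1 * (p + a).2 := mul_nonneg a1 b3
    have k4 : 0 ≤ p.2 * (p + a).1 := mul_nonneg a3 b1
    have h2 : |det p a| ≤ 2 * (c * d) := by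
      rw [e, abs_le]; constructor <;> nlinarith
    simp only [sh, List.length_cons]
    calc |det p a + sh (p + a) σ| ≤ |det p a| + |sh (p + a) σ| := abs_add_le _ _
      _ ≤ _ := by push_cast; linarith

lemma SRel_exists {c d : ℕ} {Init : List Pt → Prop} {s : ℤ → Prop} (e : ℤ)
    (hs : ∀ t, s t → 0 < e * t) (p : Pt) :
    ∀ (N : ℕ) (σ : List Pt), σ.length = N → Inside (rect c d) (pathFrom p σ) →
      ∃ m, SRel (rect c d) Init s p σ m := by
  intro N
  induction N using Nat.strong_induction_on with
  | _ N ihN =>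
  have key : ∀ (K : ℕ) (σ : List Pt), σ.length = N → Inside (rect c d) (pathFrom p σ) →
      (e * sh p σ + |e| * (N * (2 * (c * d)))).toNat = K →
      ∃ m, SRel (rect c d) Init s p σ m := by
    intro K
    induction K using Nat.strong_induction_on with
    | _ K ihK =>
    intro σ hN hin hK
    by_cases hI : Init (pathFrom p σ)
    · exact ⟨1, .init hI⟩
    by_cases hT : NT s σ
    · exact ⟨0, .noTurn hI hT⟩
    obtain ⟨S, u, v, T, rfl, hs', hn⟩ : ∃ S u v T, σ = S ++ u :: v :: T ∧ s (det u v) ∧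
        NT s (S ++ [u]) := by
      have hex : ∃ k, TurnAt s (pathFrom p σ) k := by
        unfold NT at hT
        push Not at hT
        obtain ⟨S, u, v, T, e, h⟩ := hT
        exact ⟨_, (turnAt_iff _ _ _ _).2 ⟨S, u, v, T, e, rfl, h⟩⟩
      obtain ⟨S, u, v, T, e, -, h⟩ := (firstTurn_iff s p σ (Nat.find hex)).1
        ⟨Nat.find_spec hex, fun j hj => Nat.find_min' hex hj⟩
      exact ⟨S, u, v, T, e, h⟩
    obtain ⟨m', hm'⟩ := ihN (S ++ (u + v) :: T).length (by rw [← hN]; simp) _ rfl (inside_cut hin)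
    by_cases hin' : Inside (rect c d) (pathFrom p (S ++ v :: u :: T))
    · have hN' : (S ++ v :: u :: T).length = N := by rw [← hN]; simp
      have hb := abs_sh_le p _ hin'
      rw [hN'] at hb
      have hlt : (e * sh p (S ++ v :: u :: T) + |e| * (N * (2 * (c * d)))).toNat < K := by
        rw [← hK]
        have hpos : 0 ≤ e * sh p (S ++ v :: u :: T) + |e| * (N * (2 * (c * d))) := by
          have h1 : |e * sh p (S ++ v :: u :: T)| ≤ |e| * (N * (2 * (c * d))) := by
            rw [abs_mul]
            exact mul_le_mul_of_nonneg_left hb (abs_nonneg e)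
          have := (abs_le.1 h1).1
          linarith
        have hsw := sh_swap p S u v T
        have h3 := hs _ hs'
        have : e * sh p (S ++ u :: v :: T) = e * sh p (S ++ v :: u :: T) + 2 * (e * det u v) := by
          rw [← sub_eq_iff_eq_add', ← mul_sub, hsw]; ring
        omega
      obtain ⟨m'', hm''⟩ := ihK _ hlt (S ++ v :: u :: T) hN' hin' rfl
      exact ⟨_, .stepIn hI hn hs' hin' hm' hm''⟩
    · exact ⟨_, .stepOut hI hn hs' hin' hm'⟩
  intro σ h1 h2
  exact key _ σ h1 h2 rfl

lemma multOf_eq {c d : ℕ} {Init : List Pt → Prop} {s : ℤ → Prop} (e : ℤ)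
    (hs : ∀ t, s t → 0 < e * t) (p : Pt) (σ : List Pt) (hin : Inside (rect c d) (pathFrom p σ)) :
    SRel (rect c d) Init s p σ (multOf (rect c d) Init s (pathFrom p σ)) := by
  obtain ⟨m, hm⟩ := SRel_exists (Init := Init) e hs p _ σ rfl hin
  have hex : ∃ m, MultRel (rect c d) Init s (pathFrom p σ) m := ⟨m, MultRel_of_SRel hm⟩
  unfold multOf
  rw [dif_pos hex]
  exact SRel_of_MultRel hex.choose_spec _ rfl

lemma SRel.ind {Δ : Set Pt} {Init : List Pt → Prop} {s : ℤ → Prop} {p : Pt}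
    (C : List Pt → ℕ → Prop)
    (h1 : ∀ σ, Init (pathFrom p σ) → C σ 1)
    (h0 : ∀ σ, ¬ Init (pathFrom p σ) → NT s σ → C σ 0)
    (hstep : ∀ S u v T m' m'', ¬ Init (pathFrom p (S ++ u :: v :: T)) → NT s (S ++ [u]) →
      s (det u v) → SRel Δ Init s p (S ++ (u + v) :: T) m' → C (S ++ (u + v) :: T) m' →
      ((Inside Δ (pathFrom p (S ++ v :: u :: T)) ∧ SRel Δ Init s p (S ++ v :: u :: T) m'' ∧
        C (S ++ v :: u :: T) m'') ∨
        (¬ Inside Δ (pathFrom p (S ++ v :: u :: T)) ∧ m'' = 0)) →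
      C (S ++ u :: v :: T) ((det u v).natAbs * m' + m''))
    {σ : List Pt} {m : ℕ} (h : SRel Δ Init s p σ m) : C σ m := by
  induction h with
  | init h => exact h1 _ h
  | noTurn h h' => exact h0 _ h h'
  | stepIn hI hn hs hin r1 r2 ih1 ih2 =>
    exact hstep _ _ _ _ _ _ hI hn hs r1 ih1 (Or.inl ⟨hin, r2, ih2⟩)
  | stepOut hI hn hs hin r1 ih1 =>
    exact hstep _ _ _ _ _ 0 hI hn hs r1 ih1 (Or.inr ⟨hin, rfl⟩)


/-! ## Part 2: positive multiplicity -/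

/-- A `λ`-positive step. -/
def Pos (v : Pt) : Prop := 0 < v.1 ∨ (v.1 = 0 ∧ v.2 < 0)

/-- Multiset of sizes of down steps. -/
def dn : List Pt → Multiset ℕ
  | [] => 0
  | v :: σ => (if v.1 = 0 then {v.2.natAbs} else 0) + dn σ

lemma dn_append (S T : List Pt) : dn (S ++ T) = dn S + dn T := by
  induction S with
  | nil => simp [dn]
  | cons a S ih => simp [dn, ih, add_assoc]

structure Valid (c d : ℕ) (σ : List Pt) : Prop where
  pos : ∀ v ∈ σ, Pos v
  sum : σ.sum = ((c : ℤ), -(d : ℤ))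
  inside : Inside (rect c d) (pathFrom (0, (d : ℤ)) σ)

lemma Pos.add {u v : Pt} (hu : Pos u) (hv : Pos v) : Pos (u + v) := by
  unfold Pos at *
  simp only [Prod.fst_add, Prod.snd_add]
  omega

lemma Valid.cut {c d : ℕ} {S : List Pt} {u v : Pt} {T : List Pt}
    (h : Valid c d (S ++ u :: v :: T)) : Valid c d (S ++ (u + v) :: T) := by
  refine ⟨?_, ?_, inside_cut h.inside⟩
  · intro w hw
    have hp := h.pos
    simp only [List.mem_append, List.mem_cons] at hw hp
    rcases hw with hw | rfl | hw
    · exact hp w (by simp [hw])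
    · exact (hp u (by simp)).add (hp v (by simp))
    · exact hp w (by simp [hw])
  · rw [← h.sum]; simp [add_assoc]

lemma Valid.push {c d : ℕ} {S : List Pt} {u v : Pt} {T : List Pt}
    (h : Valid c d (S ++ u :: v :: T))
    (hi : Inside (rect c d) (pathFrom (0, (d : ℤ)) (S ++ v :: u :: T))) :
    Valid c d (S ++ v :: u :: T) := by
  refine ⟨?_, ?_, hi⟩
  · intro w hw
    apply h.pos
    simp only [List.mem_append, List.mem_cons] at hw ⊢
    tauto
  · rw [← h.sum]; simp only [List.sum_append, List.sum_cons]; abel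

/-- The nondeterministic machine which describes paths with positive `mult₊`. -/
def Run : List Pt → Multiset ℕ → Multiset ℕ → Prop
  | [], P, Q => P = Q
  | v :: σ, P, Q =>
    (v.1 = 0 ∧ ∃ b : ℕ, 0 < b ∧ v.2 = -(b : ℤ) ∧ Run σ (b ::ₘ P) Q) ∨
    (v.1 = 1 ∧ ∃ M P' : Multiset ℕ, P = M + P' ∧ v.2 = (M.sum : ℤ) ∧ Run σ P' Q)

lemma run_append (S T : List Pt) (P R : Multiset ℕ) :
    Run (S ++ T) P R ↔ ∃ Q, Run S P Q ∧ Run T Q R := by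
  induction S generalizing P with
  | nil => simp [Run]
  | cons a S ih =>
    simp only [List.cons_append, Run, ih]
    constructor
    · rintro (⟨h, b, hb, e, Q, h1, h2⟩ | ⟨h, M, P', e, e', Q, h1, h2⟩)
      · exact ⟨Q, Or.inl ⟨h, b, hb, e, h1⟩, h2⟩
      · exact ⟨Q, Or.inr ⟨h, M, P', e, e', h1⟩, h2⟩
    · rintro ⟨Q, (⟨h, b, hb, e, h1⟩ | ⟨h, M, P', e, e', h1⟩), h2⟩
      · exact Or.inl ⟨h, b, hb, e, Q, h1, h2⟩
      · exact Or.inr ⟨h, M, P', e, e', Q, h1, h2⟩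

lemma run_le {S : List Pt} {P Q : Multiset ℕ} (h : Run S P Q) : Q ≤ P + dn S := by
  induction S generalizing P with
  | nil => simp only [Run] at h; simp [dn, h]
  | cons a S ih =>
    rcases h with ⟨h, b, hb, e, h1⟩ | ⟨h, M, P', rfl, e', h1⟩
    · have := ih h1
      simp only [dn, h, e]
      simpa [Multiset.cons_add, Multiset.singleton_add, Multiset.add_cons] using this
    · have := ih h1
      simp only [dn, h]
      refine this.trans ?_
      simp [add_assoc]

lemma run_sum {S : List Pt} {P Q : Multiset ℕ} (h : Run S P Q) :
    (Q.sum : ℤ) = P.sum - S.sum.2 := by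
  induction S generalizing P with
  | nil => simp only [Run] at h; simp [h]
  | cons a S ih =>
    rcases h with ⟨h, b, hb, e, h1⟩ | ⟨h, M, P', rfl, e', h1⟩
    · have := ih h1
      simp only [Multiset.sum_cons, Nat.cast_add, List.sum_cons, Prod.snd_add] at this ⊢
      omega
    · have := ih h1
      simp only [Multiset.sum_add, Nat.cast_add, List.sum_cons, Prod.snd_add] at this ⊢
      omega

lemma run_posQ {S : List Pt} {P Q : Multiset ℕ} (h : Run S P Q) (hP : ∀ b ∈ P, 0 < b) :
    ∀ b ∈ Q, 0 < b := by
  induction S generalizing P with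
  | nil => simp only [Run] at h; subst h; exact hP
  | cons a S ih =>
    rcases h with ⟨h, b, hb, e, h1⟩ | ⟨h, M, P', rfl, e', h1⟩
    · apply ih h1
      intro b' hb'
      rcases Multiset.mem_cons.1 hb' with rfl | h'
      · exact hb
      · exact hP _ h'
    · apply ih h1
      intro b' hb'
      exact hP _ (by simp [hb'])

lemma run_step {S : List Pt} {P Q : Multiset ℕ} (h : Run S P Q) :
    ∀ v ∈ S, (v.1 = 0 ∧ v.2 < 0) ∨ (v.1 = 1 ∧ 0 ≤ v.2) := by
  induction S generalizing P with
  | nil => simp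
  | cons a S ih =>
    intro v hv
    rcases h with ⟨h, b, hb, e, h1⟩ | ⟨h, M, P', rfl, e', h1⟩
    · rcases List.mem_cons.1 hv with rfl | hv
      · left; omega
      · exact ih h1 v hv
    · rcases List.mem_cons.1 hv with rfl | hv
      · right; omega
      · exact ih h1 v hv

lemma det_def (u v : Pt) : det u v = u.1 * v.2 - u.2 * v.1 := rfl

lemma run_back_cut {u v : Pt} {T : List Pt} {P Q : Multiset ℕ} (hu : Pos u) (hv : Pos v)
    (hd : 0 < det u v) (h : Run ((u + v) :: T) P Q) : Run (u :: v :: T) P Q := by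
  rw [det_def] at hd
  rcases h with ⟨h, b, hb, e, h1⟩ | ⟨h, M, P', rfl, e', h1⟩
  · simp only [Prod.fst_add] at h
    have h1 : u.1 = 0 := by unfold Pos at hu hv; omega
    have h2 : v.1 = 0 := by omega
    simp [h1, h2] at hd
  · simp only [Prod.fst_add, Prod.snd_add] at h e'
    have hcase : (u.1 = 0 ∧ v.1 = 1) ∨ (u.1 = 1 ∧ v.1 = 0) := by unfold Pos at hu hv; omega
    rcases hcase with ⟨a1, a2⟩ | ⟨a1, a2⟩
    · have hu2 : u.2 < 0 := by unfold Pos at hu; omega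
      have hb : u.2 = -((u.2.natAbs : ℕ) : ℤ) := by omega
      refine Or.inl ⟨a1, u.2.natAbs, by omega, hb, Or.inr ⟨a2, u.2.natAbs ::ₘ M, P', ?_, ?_, h1⟩⟩
      · simp
      · rw [Multiset.sum_cons, Nat.cast_add]; omega
    · rw [a1, a2] at hd
      unfold Pos at hv; omega

lemma run_back_push {u v : Pt} {T : List Pt} {P Q : Multiset ℕ}
    (hd : 0 < det u v) (h : Run (v :: u :: T) P Q) : Run (u :: v :: T) P Q := by
  rw [det_def] at hd
  rcases h with ⟨hv, b, hb, e, ⟨hu, b', hb', e', h1⟩ | ⟨hu, M, P', eP, e', h1⟩⟩ |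
    ⟨hv, M, P', eP, e', ⟨hu, b, hb, e, h1⟩ | ⟨hu, M2, P2, eP2, e2', h1⟩⟩
  · simp [hu, hv] at hd
  · rw [hu, hv] at hd; omega
  · refine Or.inl ⟨hu, b, hb, e, Or.inr ⟨hv, M, b ::ₘ P', ?_, e', h1⟩⟩
    simp [eP]
  · refine Or.inr ⟨hu, M2, M + P2, ?_, e2', Or.inr ⟨hv, M, P2, rfl, e', h1⟩⟩
    rw [eP, eP2, add_left_comm]

lemma hSteps_eq (l : List ℕ) : hSteps l = l.map (fun k : ℕ => ((k : ℤ), (0 : ℤ))) := by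
  unfold hSteps
  induction l with
  | nil => rfl
  | cons a l ih => simpa using ih

lemma dSteps_eq (l : List ℕ) : dSteps l = l.map (fun k : ℕ => ((0 : ℤ), -(k : ℤ))) := by
  unfold dSteps
  induction l with
  | nil => rfl
  | cons a l ih => simpa using ih

lemma initPlus_iff {c d : ℕ} {σ : List Pt} :
    InitPlusRect d (Multiset.replicate c 1) {d} (pathFrom (0, (d : ℤ)) σ) ↔
      σ = List.replicate c ((1 : ℤ), (0 : ℤ)) ++ [((0 : ℤ), -(d : ℤ))] := by
  constructor
  · rintro ⟨s, t, hs, ht, e⟩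
    have := pathFrom_inj _ _ _ e
    have hs' : s = List.replicate c 1 := by
      rw [← Multiset.coe_replicate, Multiset.coe_eq_coe, List.perm_replicate] at hs
      exact hs
    have ht' : t = [d] := by
      rw [Multiset.coe_eq_singleton] at ht; exact ht
    rw [this, hs', ht', hSteps_eq, List.map_replicate]
    simp [dSteps_eq]
  · rintro rfl
    exact ⟨List.replicate c 1, [d], rfl, rfl, by rw [hSteps_eq, List.map_replicate]; simp [dSteps_eq]⟩

lemma run_replicate (c : ℕ) (P : Multiset ℕ) :
    Run (List.replicate c ((1 : ℤ), (0 : ℤ))) P P := by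
  induction c with
  | zero => simp [Run]
  | succ c ih => exact Or.inr ⟨rfl, 0, P, by simp, by simp, ih⟩

/-- Abbreviation for the recursion of `mult₊`. -/
abbrev SP (c d : ℕ) : List Pt → ℕ → Prop :=
  SRel (rect c d) (InitPlusRect d (Multiset.replicate c 1) {d}) (fun x => 0 < x) (0, (d : ℤ))

lemma run_of_plus {c d : ℕ} (hd : 0 < d) {σ : List Pt} {m : ℕ} (h : SP c d σ m) :
    m ≠ 0 → (∀ v ∈ σ, Pos v) → Run σ 0 {d} := by
  induction h with
  | init h =>
    intro _ _
    rw [initPlus_iff] at h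
    rw [h, run_append]
    exact ⟨0, run_replicate c 0, Or.inl ⟨rfl, d, hd, rfl, by simp [Run]⟩⟩
  | noTurn => intro h; exact absurd rfl h
  | @stepIn S u v T m' m'' hI hn hs hin _ _ ih1 ih2 =>
    intro hm hp
    have hu : Pos u := hp u (by simp)
    have hv : Pos v := hp v (by simp)
    rw [run_append]
    by_cases hm' : m' = 0
    · have hm'' : m'' ≠ 0 := by rintro rfl; simp [hm'] at hm
      have := ih2 hm'' (by
        intro w hw; apply hp
        simp only [List.mem_append, List.mem_cons] at hw ⊢; tauto)
      rw [run_append] at this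
      obtain ⟨Q, h1, h2⟩ := this
      exact ⟨Q, h1, run_back_push hs h2⟩
    · have := ih1 hm' (by
        intro w hw
        simp only [List.mem_append, List.mem_cons] at hw
        rcases hw with hw | rfl | hw
        · exact hp w (by simp [hw])
        · exact hu.add hv
        · exact hp w (by simp [hw]))
      rw [run_append] at this
      obtain ⟨Q, h1, h2⟩ := this
      exact ⟨Q, h1, run_back_cut hu hv hs h2⟩
  | @stepOut S u v T m' hI hn hs hin _ ih1 =>
    intro hm hp
    have hu : Pos u := hp u (by simp)
    have hv : Pos v := hp v (by simp)
    rw [run_append]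
    have hm' : m' ≠ 0 := by rintro rfl; simp at hm
    have := ih1 hm' (by
      intro w hw
      simp only [List.mem_append, List.mem_cons] at hw
      rcases hw with hw | rfl | hw
      · exact hp w (by simp [hw])
      · exact hu.add hv
      · exact hp w (by simp [hw]))
    rw [run_append] at this
    obtain ⟨Q, h1, h2⟩ := this
    exact ⟨Q, h1, run_back_cut hu hv hs h2⟩

/-- Genericity of a multiset. -/
structure GenM (X : Multiset ℕ) : Prop where
  nodup : X.Nodup
  uniq : ∀ M M', M ≤ X → M' ≤ X → M.sum = M'.sum → M = M'
  pos : ∀ b ∈ X, 0 < b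

lemma run_det {X : Multiset ℕ} (hX : GenM X) {S : List Pt} {P Q Q' : Multiset ℕ}
    (h : Run S P Q) (h' : Run S P Q') (hle : P + dn S ≤ X) : Q = Q' := by
  induction S generalizing P with
  | nil => simp only [Run] at h h'; rw [← h, ← h']
  | cons a S ih =>
    rcases h with ⟨h, b, hb, e, h1⟩ | ⟨h, M, P', rfl, e, h1⟩ <;>
    rcases h' with ⟨k, b', hb', e', h1'⟩ | ⟨k, M', P'', eP, e', h1'⟩
    · obtain rfl : b = b' := by omega
      refine ih h1 h1' ?_
      simp only [dn, h, e] at hle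
      simpa [Multiset.cons_add, Multiset.singleton_add, Multiset.add_cons] using hle
    · omega
    · omega
    · simp only [dn, h] at hle
      have hle2 : M + P' + dn S ≤ X := by simpa using hle
      have hM : M ≤ X := le_trans (by rw [add_assoc]; exact Multiset.le_add_right _ _) hle2
      have hM' : M' ≤ X := le_trans (by rw [eP, add_assoc]; exact Multiset.le_add_right _ _) hle2
      obtain rfl := hX.uniq M M' hM hM' (by omega)
      obtain rfl := add_left_cancel eP
      refine ih h1 h1' (le_trans ?_ hle2)
      rw [add_assoc]; exact Multiset.le_add_left _ _

lemma run_zero_nodown {S : List Pt} {Q : Multiset ℕ} (h : Run S 0 Q) (hn : ∀ v ∈ S, v.1 ≠ 0) :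
    S = List.replicate S.length ((1 : ℤ), (0 : ℤ)) ∧ dn S = 0 := by
  induction S with
  | nil => simp [dn]
  | cons a S ih =>
    rcases h with ⟨h, b, hb, e, h1⟩ | ⟨h, M, P', eP, e, h1⟩
    · exact absurd h (hn a (by simp))
    · have hM : M = 0 ∧ P' = 0 := by simpa using eP.symm
      rw [hM.2] at h1
      obtain ⟨i1, i2⟩ := ih h1 (fun v hv => hn v (by simp [hv]))
      constructor
      · rw [List.length_cons, List.replicate_succ, ← i1]
        congr 1
        ext
        · exact h
        · rw [e, hM.1]; simp
      · simp [dn, h, i2]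

lemma sum_replicate_h (k : ℕ) :
    (List.replicate k ((1 : ℤ), (0 : ℤ))).sum = ((k : ℤ), 0) := by
  rw [List.sum_replicate]; simp

/-- last step not down, no left turn: no down at all -/
lemma nodown_of_last {S : List Pt} (hp : ∀ v ∈ S, Pos v) (hn : NT (fun x => 0 < x) S)
    (hl : ∀ S' v, S = S' ++ [v] → v.1 ≠ 0) : ∀ v ∈ S, v.1 ≠ 0 := by
  induction S using List.reverseRecOn with
  | nil => simp
  | append_singleton S u ih =>
    intro v hv
    have hu := hl S u rfl
    simp only [List.mem_append, List.mem_singleton] at hv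
    rcases hv with hv | rfl
    · refine ih (fun w hw => hp w (by simp [hw])) hn.pre ?_ v hv
      rintro S' t rfl h0
      have := hn S' t u [] (by simp)
      have ht : Pos t := hp t (by simp)
      have hup : Pos u := hp u (by simp)
      rw [det_def, h0] at this
      unfold Pos at ht hup
      have h1 : t.2 < 0 := by omega
      have h2 : 0 < u.1 := by omega
      apply this
      nlinarith
    · exact hu

lemma sum_fst_nonneg {S : List Pt} (hp : ∀ v ∈ S, Pos v) : 0 ≤ S.sum.1 := by
  induction S with
  | nil => simp
  | cons a S ih =>
    have h1 := ih (fun v hv => hp v (by simp [hv]))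
    have h2 := hp a (by simp)
    unfold Pos at h2
    simp only [List.sum_cons, Prod.fst_add]
    omega

lemma run_inside {c d : ℕ} {X : Multiset ℕ} (hXd : X.sum = d) {α : List Pt}
    (hr : Run α 0 0) (hle : dn α ≤ X) (hp : ∀ v ∈ α, Pos v) (hsum : α.sum = ((c : ℤ), 0)) :
    Inside (rect c d) (pathFrom (0, (d : ℤ)) (α ++ [((0 : ℤ), -(d : ℤ))])) := by
  rw [pathFrom_append]
  intro z hz
  simp only [List.mem_append, pathFrom, List.mem_singleton] at hz
  rcases hz with hz | rfl
  · obtain ⟨S, T, rfl, rfl⟩ := (mem_pathFrom _ _ _).1 hz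
    rw [run_append] at hr
    obtain ⟨P, h1, h2⟩ := hr
    have hs := run_sum h1
    have hPX : P ≤ X := (run_le h1).trans (by
      rw [zero_add]; refine le_trans ?_ hle; rw [dn_append]; exact Multiset.le_add_right _ _)
    have hsle : P.sum ≤ d := by
      rw [← hXd]
      obtain ⟨R, rfl⟩ := Multiset.le_iff_exists_add.1 hPX
      simp
    have hS := sum_fst_nonneg (S := S) (fun v hv => hp v (by simp [hv]))
    have hT := sum_fst_nonneg (S := T) (fun v hv => hp v (by simp [hv]))
    have hc := congrArg Prod.fst hsum
    simp only [List.sum_append, Prod.fst_add] at hc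
    simp only [rect, Set.mem_ofPred_eq, Prod.fst_add, Prod.snd_add]
    simp only [Multiset.sum_zero, Nat.cast_zero] at hs
    omega
  · rw [hsum]
    simp [rect]

lemma split_last {S : List Pt} {u v : Pt} {T α : List Pt} {w : Pt}
    (e : S ++ u :: v :: T = α ++ [w]) :
    (T = [] ∧ α = S ++ [u] ∧ v = w) ∨ ∃ T', T = T' ++ [w] ∧ α = S ++ u :: v :: T' := by
  rcases List.eq_nil_or_concat T with rfl | ⟨T', b, rfl⟩
  · left
    have e' : (S ++ [u]) ++ [v] = α ++ [w] := by simpa using e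
    obtain ⟨h1, h2⟩ := List.append_inj' e' rfl
    exact ⟨rfl, h1.symm, by simpa using h2⟩
  · right
    have e' : (S ++ u :: v :: T') ++ [b] = α ++ [w] := by simpa using e
    obtain ⟨h1, h2⟩ := List.append_inj' e' rfl
    have hb : b = w := by simpa using h2
    exact ⟨T', by simp [hb], h1.symm⟩

lemma plus_eval {c d : ℕ} (hd : 0 < d) {X : Multiset ℕ} (hX : GenM X) (hXd : X.sum = d)
    {σ : List Pt} {m : ℕ} (h : SP c d σ m) :
    ∀ α, σ = α ++ [((0 : ℤ), -(d : ℤ))] → Valid c d σ → Run α 0 0 → dn α ≤ X →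
      m = (dn α).prod := by
  have hsumα : ∀ α : List Pt, Valid c d (α ++ [((0 : ℤ), -(d : ℤ))]) →
      α.sum = ((c : ℤ), 0) := by
    intro α hv
    have := hv.sum
    simp only [List.sum_append, List.sum_singleton] at this
    have h1 := congrArg Prod.fst this
    have h2 := congrArg Prod.snd this
    simp at h1 h2
    ext <;> simp [h1, h2]
  refine SRel.ind (fun σ m => ∀ α, σ = α ++ [((0 : ℤ), -(d : ℤ))] → Valid c d σ → Run α 0 0 →
    dn α ≤ X → m = (dn α).prod) ?_ ?_ ?_ h
  · rintro σ h α rfl hv hr hle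
    rw [initPlus_iff] at h
    have h' := List.append_cancel_right h
    have : ∀ v ∈ α, v.1 ≠ 0 := by
      rw [h']; intro v hv; simp [List.mem_replicate] at hv; simp [hv.2]
    rw [(run_zero_nodown hr this).2]; simp
  · rintro σ h hn α rfl hv hr hle
    exfalso
    apply h
    rw [initPlus_iff]
    congr 1
    have hnd : ∀ v ∈ α, v.1 ≠ 0 := by
      refine nodown_of_last (fun v hv' => hv.pos v (by simp [hv'])) hn.pre ?_
      rintro S' v rfl h0
      rw [run_append] at hr
      obtain ⟨Q, h1, h2⟩ := hr
      rcases h2 with ⟨-, b, hb, e, h2⟩ | ⟨h2, _⟩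
      · simp [Run] at h2
      · omega
    have h1 := (run_zero_nodown hr hnd).1
    have h2 := hsumα α hv
    rw [h1, sum_replicate_h] at h2
    have : α.length = c := by simpa using congrArg Prod.fst h2
    rw [← this]; exact h1
  · intro S u v T m' m'' hI hn hs r1 ih1 hpush α e hv hr hle
    have hu : Pos u := hv.pos u (by simp)
    have hvp : Pos v := hv.pos v (by simp)
    have hv1 := hv.cut
    have hs' := hs
    rw [det_def] at hs'
    rcases split_last e with ⟨rfl, rfl, rfl⟩ | ⟨T, rfl, rfl⟩
    · exfalso
      unfold Pos at hu
      simp at hs'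
      have : 0 ≤ u.1 := by omega
      have : 0 ≤ u.1 * (d : ℤ) := by positivity
      omega
    have hR : m' ≠ 0 → ∃ P, Run S 0 P ∧ ∃ Q, Run ((u + v) :: T) P Q := by
      intro hm
      have h1 := run_of_plus hd r1 hm hv1.pos
      rw [run_append] at h1
      obtain ⟨P, h1, h2⟩ := h1
      rw [← List.cons_append, run_append] at h2
      obtain ⟨Q, h2, h3⟩ := h2
      exact ⟨P, h1, Q, h2⟩
    have hR2 : m'' ≠ 0 → ∃ P, Run S 0 P ∧ ∃ Q, Run (v :: u :: T) P Q := by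
      intro hm
      rcases hpush with ⟨hin, r2, -⟩ | ⟨-, h0⟩
      · have h1 := run_of_plus hd r2 hm (hv.push hin).pos
        rw [run_append] at h1
        obtain ⟨P, h1, h2⟩ := h1
        rw [← List.cons_append, ← List.cons_append, run_append] at h2
        obtain ⟨Q, h2, h3⟩ := h2
        exact ⟨P, h1, Q, h2⟩
      · exact absurd h0 hm
    -- the value after a push which keeps the run
    have hpushval : Run (S ++ v :: u :: T) 0 0 → m'' = (dn (S ++ u :: v :: T)).prod := by
      intro hr2
      have hdn : dn (S ++ v :: u :: T) = dn (S ++ u :: v :: T) := by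
        simp only [dn_append, dn]
        rw [add_left_comm (if v.1 = 0 then _ else _)]
      have hα := hsumα (S ++ u :: v :: T) (by simpa using hv)
      have hin0 : Inside (rect c d) (pathFrom (0, (d : ℤ))
          (S ++ v :: u :: (T ++ [((0 : ℤ), -(d : ℤ))]))) := by
        have := run_inside (c := c) hXd hr2 (by rw [hdn]; exact hle) (by
          intro w hw
          apply hv.pos
          simp only [List.mem_append, List.mem_cons] at hw ⊢
          tauto) (by
          rw [← hα]; simp only [List.sum_append, List.sum_cons]; abel)
        simpa using this
      rcases hpush with ⟨hin, r2, ih2⟩ | ⟨hin, h0⟩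
      · rw [← hdn]
        exact ih2 _ (by simp) (hv.push hin) hr2 (by rw [hdn]; exact hle)
      · exact absurd hin0 hin
    rw [run_append] at hr
    obtain ⟨P, hrS, hr2⟩ := hr
    have hPS : P ≤ dn S := by simpa using run_le hrS
    have hSX : 0 + dn S ≤ X := by
      rw [zero_add]; refine le_trans ?_ hle; rw [dn_append]; exact Multiset.le_add_right _ _
    rcases hr2 with ⟨hu1, b, hb, e', ⟨hv1', b', hb', e'', h1⟩ | ⟨hv1', M, P', eP, e'', h1⟩⟩ |
      ⟨hu1, M, P', eP, e', ⟨hv1', b, hb, e'', h1⟩ | ⟨hv1', M2, P2, eP2, e2', h1⟩⟩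
    · simp [hu1, hv1'] at hs'
    · have hdnα : dn (S ++ u :: v :: T) = b ::ₘ (dn S + dn T) := by
        simp only [dn_append, dn, hu1, hv1', e']
        simp [Multiset.singleton_add]
      have hbX : b ::ₘ P ≤ X := by
        refine le_trans ?_ hle
        rw [hdnα]
        exact Multiset.cons_le_cons _ (hPS.trans (Multiset.le_add_right _ _))
      have hbP : b ∉ P := (Multiset.nodup_cons.1 (Multiset.nodup_of_le hbX hX.nodup)).1
      have hMX : M ≤ X := le_trans (by rw [eP]; exact Multiset.le_add_right _ _) hbX
      have hPX : P ≤ X := (Multiset.le_cons_self _ _).trans hbX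
      have hdet : (det u v).natAbs = b := by rw [det_def, hu1, hv1', e']; simp
      by_cases hbM : b ∈ M
      · obtain ⟨M', rfl⟩ := Multiset.exists_cons_of_mem hbM
        have eP' : P = M' + P' := by
          rw [Multiset.cons_add] at eP
          exact (Multiset.cons_inj_right b).1 eP
        have hm'' : m'' = 0 := by
          by_contra hne
          obtain ⟨P2, hP2, Q, hQ⟩ := hR2 hne
          obtain rfl := run_det hX hrS hP2 hSX
          rcases hQ with ⟨h, _⟩ | ⟨h, M2, P3, rfl, e3, _⟩
          · omega
          · have hM2 : M2 ≤ M2 + P3 := Multiset.le_add_right _ _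
            have := hX.uniq _ _ (hM2.trans hPX) hMX (by omega)
            apply hbP
            apply Multiset.mem_of_le hM2
            rw [this]; simp
        have hdnc : dn (S ++ (u + v) :: T) = dn S + dn T := by
          simp [dn_append, dn, hu1, hv1']
        have hval := ih1 (S ++ (u + v) :: T) (by simp) hv1 (by
          rw [run_append]
          refine ⟨P, hrS, Or.inr ⟨by simp [hu1, hv1'], M', P', eP', ?_, h1⟩⟩
          rw [Multiset.sum_cons, Nat.cast_add] at e''
          simp only [Prod.snd_add]; omega) (by
          rw [hdnc]; refine le_trans ?_ hle; rw [hdnα]; exact Multiset.le_cons_self _ _)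
        rw [hm'', hval, hdet, hdnc, hdnα, Multiset.prod_cons, add_zero]
      · have hbP' : b ∈ P' := by
          have : b ∈ M + P' := by rw [← eP]; simp
          rcases Multiset.mem_add.1 this with h | h
          · exact absurd h hbM
          · exact h
        obtain ⟨P'', rfl⟩ := Multiset.exists_cons_of_mem hbP'
        have eP' : P = M + P'' := by
          rw [Multiset.add_cons] at eP
          exact (Multiset.cons_inj_right b).1 eP
        have hm' : m' = 0 := by
          by_contra hne
          obtain ⟨P2, hP2, Q, hQ⟩ := hR hne
          obtain rfl := run_det hX hrS hP2 hSX
          rcases hQ with ⟨h, _⟩ | ⟨h, M2, P3, rfl, e3, _⟩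
          · simp [hu1, hv1'] at h
          · have hM2 : b ::ₘ M2 ≤ b ::ₘ (M2 + P3) :=
              Multiset.cons_le_cons _ (Multiset.le_add_right _ _)
            have := hX.uniq _ _ (hM2.trans hbX) hMX (by
              simp only [Prod.snd_add] at e3
              rw [Multiset.sum_cons]; omega)
            apply hbM
            rw [← this]; simp
        rw [hm', mul_zero, zero_add]
        apply hpushval
        rw [run_append]
        exact ⟨P, hrS, Or.inr ⟨hv1', M, P'', eP', e'', Or.inl ⟨hu1, b, hb, e', h1⟩⟩⟩
    · rw [hu1, hv1'] at hs'; omega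
    · have hm' : m' = 0 := by
        by_contra hne
        obtain ⟨P2, hP2, Q, hQ⟩ := hR hne
        rcases hQ with ⟨h, _⟩ | ⟨h, _⟩ <;> simp [hu1, hv1'] at h
      rw [hm', mul_zero, zero_add]
      apply hpushval
      rw [run_append]
      refine ⟨P, hrS, Or.inr ⟨hv1', M2, M + P2, ?_, e2', Or.inr ⟨hu1, M, P2, rfl, e', h1⟩⟩⟩
      rw [eP, eP2, add_left_comm]


/-! ## Part 3: negative multiplicity -/

lemma dn_dSteps (s : List ℕ) : dn (dSteps s) = (s : Multiset ℕ) := by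
  rw [dSteps_eq]
  induction s with
  | nil => rfl
  | cons a s ih =>
    simp only [List.map_cons, dn, ih]
    simp [Multiset.singleton_add]

lemma initMinus_iff {c d : ℕ} {X : Multiset ℕ} {σ : List Pt} :
    InitMinusRect d {c} X (pathFrom (0, (d : ℤ)) σ) ↔
      ∃ s : List ℕ, (s : Multiset ℕ) = X ∧ σ = dSteps s ++ [((c : ℤ), (0 : ℤ))] := by
  constructor
  · rintro ⟨s, t, hs, ht, e⟩
    have h := pathFrom_inj _ _ _ e
    have ht' : t = [c] := by
      rw [Multiset.coe_eq_singleton] at ht; exact ht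
    refine ⟨s, hs, ?_⟩
    rw [h, ht', hSteps_eq]; rfl
  · rintro ⟨s, hs, rfl⟩
    exact ⟨s, [c], hs, rfl, by rw [hSteps_eq]; rfl⟩

/-- Abbreviation for the recursion of `mult₋`. -/
abbrev SM (c d : ℕ) (X : Multiset ℕ) : List Pt → ℕ → Prop :=
  SRel (rect c d) (InitMinusRect d {c} X) (fun x => x < 0) (0, (d : ℤ))

lemma fst_add_ne {u v : Pt} (hu : Pos u) (hv : Pos v) (h : det u v < 0) : (u + v).1 ≠ 0 := by
  intro h0
  simp only [Prod.fst_add] at h0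
  unfold Pos at hu hv
  have h1 : u.1 = 0 := by omega
  have h2 : v.1 = 0 := by omega
  rw [det_def, h1, h2] at h
  simp at h

lemma dn_cut_le {S : List Pt} {u v : Pt} {T : List Pt} (h : (u + v).1 ≠ 0) :
    dn (S ++ (u + v) :: T) ≤ dn (S ++ u :: v :: T) := by
  simp only [dn_append, dn, if_neg h, zero_add]
  refine add_le_add_right ?_ _
  rw [← add_assoc]
  exact Multiset.le_add_left _ _

lemma dn_swap (S : List Pt) (u v : Pt) (T : List Pt) :
    dn (S ++ v :: u :: T) = dn (S ++ u :: v :: T) := by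
  simp only [dn_append, dn]
  rw [add_left_comm (if v.1 = 0 then _ else _)]

lemma minus_dn_le {c d : ℕ} {X : Multiset ℕ} {σ : List Pt} {m : ℕ} (h : SM c d X σ m) :
    m ≠ 0 → (∀ v ∈ σ, Pos v) → X ≤ dn σ := by
  refine SRel.ind (fun σ m => m ≠ 0 → (∀ v ∈ σ, Pos v) → X ≤ dn σ) ?_ ?_ ?_ h
  · intro σ h _ _
    obtain ⟨s, hs, rfl⟩ := initMinus_iff.1 h
    rw [dn_append, dn_dSteps, hs]
    exact Multiset.le_add_right _ _
  · intro σ _ _ h; exact absurd rfl h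
  · intro S u v T m' m'' hI hn hs r1 ih1 hpush hm hp
    have hu : Pos u := hp u (by simp)
    have hv : Pos v := hp v (by simp)
    by_cases hm' : m' = 0
    · rcases hpush with ⟨hin, r2, ih2⟩ | ⟨-, h0⟩
      · have := ih2 (by rintro rfl; simp [hm'] at hm) (by
          intro w hw; apply hp
          simp only [List.mem_append, List.mem_cons] at hw ⊢; tauto)
        rwa [dn_swap] at this
      · simp [hm', h0] at hm
    · have := ih1 hm' (by
        intro w hw
        simp only [List.mem_append, List.mem_cons] at hw
        rcases hw with hw | rfl | hw
        · exact hp w (by simp [hw])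
        · exact hu.add hv
        · exact hp w (by simp [hw]))
      exact this.trans (dn_cut_le (fst_add_ne hu hv hs))

lemma Valid.pre_mem {c d : ℕ} {S T : List Pt} (h : Valid c d (S ++ T)) :
    0 ≤ S.sum.1 ∧ S.sum.1 ≤ c ∧ 0 ≤ d + S.sum.2 ∧ d + S.sum.2 ≤ d := by
  have := inside_iff.1 h.inside S T rfl
  simpa [rect] using this

lemma minus_last {c d : ℕ} {X : Multiset ℕ} {σ : List Pt} {m : ℕ} (h : SM c d X σ m) :
    m ≠ 0 → Valid c d σ → ∀ S (k : ℤ), σ = S ++ [(k, (0 : ℤ))] → k = c := by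
  refine SRel.ind (fun σ m => m ≠ 0 → Valid c d σ →
    ∀ S (k : ℤ), σ = S ++ [(k, (0 : ℤ))] → k = c) ?_ ?_ ?_ h
  · rintro σ h _ _ S k rfl
    obtain ⟨s, hs, e⟩ := initMinus_iff.1 h
    have := (List.append_inj' e rfl).2
    simpa using this
  · intro σ _ _ h; exact absurd rfl h
  · intro S u v T m' m'' hI hn hs r1 ih1 hpush hm hv S' k e
    rcases split_last e with ⟨rfl, rfl, rfl⟩ | ⟨T, rfl, rfl⟩
    · exfalso
      have hk : Pos (k, (0 : ℤ)) := hv.pos _ (by simp)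
      have hk' : 0 < k := by simpa [Pos] using hk
      rw [det_def] at hs
      simp at hs
      have hu2 : 0 < u.2 := pos_of_mul_pos_left hs hk'.le
      have h1 := hv.pre_mem
      have h2 := congrArg Prod.snd hv.sum
      simp at h2
      omega
    · by_cases hm' : m' = 0
      · rcases hpush with ⟨hin, r2, ih2⟩ | ⟨-, h0⟩
        · exact ih2 (by rintro rfl; simp [hm'] at hm) (hv.push hin) (S ++ v :: u :: T) k (by simp)
        · simp [hm', h0] at hm
      · exact ih1 hm' hv.cut (S ++ (u + v) :: T) k (by simp)

lemma nt_snd_le {β : List Pt} {w : Pt} (hp : ∀ v ∈ β ++ [w], Pos v)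
    (hn : NT (fun x => x < 0) (β ++ [w])) (hw : w.2 ≤ 0) : ∀ v ∈ β ++ [w], v.2 ≤ 0 := by
  induction β using List.reverseRecOn generalizing w with
  | nil => simpa using hw
  | append_singleton β u ih =>
    have hup : Pos u := hp u (by simp)
    have hwp : Pos w := hp w (by simp)
    have hu : u.2 ≤ 0 := by
      by_contra hc
      have := hn β u w [] (by simp)
      rw [det_def] at this
      unfold Pos at hup hwp
      have h1 : 0 < u.1 := by omega
      apply this
      rcases hwp with h | h
      · nlinarith
      · rw [h.1]; nlinarith
    have hi := ih (w := u) (fun v hv => hp v (by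
      simp only [List.mem_append] at hv ⊢; tauto)) hn.pre hu
    intro v hv
    rw [List.mem_append] at hv
    rcases hv with hv | hv
    · exact hi v hv
    · rw [List.mem_singleton] at hv; rwa [hv]

lemma nt_fst_zero {β : List Pt} {w : Pt} (hp : ∀ v ∈ β ++ [w], Pos v)
    (hn : NT (fun x => x < 0) (β ++ [w])) (hw : w.1 = 0) : ∀ v ∈ β ++ [w], v.1 = 0 := by
  induction β using List.reverseRecOn generalizing w with
  | nil => simpa using hw
  | append_singleton β u ih =>
    have hup : Pos u := hp u (by simp)
    have hwp : Pos w := hp w (by simp)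
    have hu : u.1 = 0 := by
      by_contra hc
      have := hn β u w [] (by simp)
      rw [det_def, hw] at this
      unfold Pos at hup hwp
      have h1 : 0 < u.1 := by omega
      have h2 : w.2 < 0 := by omega
      apply this
      nlinarith
    have hi := ih (w := u) (fun v hv => hp v (by
      simp only [List.mem_append] at hv ⊢; tauto)) hn.pre hu
    intro v hv
    rw [List.mem_append] at hv
    rcases hv with hv | hv
    · exact hi v hv
    · rw [List.mem_singleton] at hv; rwa [hv]

lemma sum_snd_nonpos {S : List Pt} (h : ∀ v ∈ S, v.2 ≤ 0) : S.sum.2 ≤ 0 := by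
  induction S with
  | nil => simp
  | cons a S ih =>
    have h1 := ih (fun v hv => h v (by simp [hv]))
    have h2 := h a (by simp)
    simp only [List.sum_cons, Prod.snd_add]
    omega

lemma all_zero_of_sum {S : List Pt} (h : ∀ v ∈ S, v.2 ≤ 0) (hs : S.sum.2 = 0) :
    ∀ v ∈ S, v.2 = 0 := by
  induction S with
  | nil => simp
  | cons a S ih =>
    have h1 := sum_snd_nonpos (S := S) (fun v hv => h v (by simp [hv]))
    have h2 := h a (by simp)
    simp only [List.sum_cons, Prod.snd_add] at hs
    intro v hv
    rcases List.mem_cons.1 hv with rfl | hv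
    · omega
    · exact ih (fun v hv => h v (by simp [hv])) (by omega) v hv

lemma sum_snd_zero {S : List Pt} (h : ∀ v ∈ S, v.2 = 0) : S.sum.2 = 0 := by
  induction S with
  | nil => simp
  | cons a S ih =>
    have h1 := ih (fun v hv => h v (by simp [hv]))
    have h2 := h a (by simp)
    simp only [List.sum_cons, Prod.snd_add]
    omega

lemma sum_fst_zero {S : List Pt} (h : ∀ v ∈ S, v.1 = 0) : S.sum.1 = 0 := by
  induction S with
  | nil => simp
  | cons a S ih =>
    have h1 := ih (fun v hv => h v (by simp [hv]))
    have h2 := h a (by simp)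
    simp only [List.sum_cons, Prod.fst_add]
    omega

lemma last_up {β : List Pt} {w : Pt} (hp : ∀ v ∈ β ++ [w], Pos v)
    (hn : NT (fun x => x < 0) (β ++ [w])) (hs : (β ++ [w]).sum.2 = 0)
    (hex : ∃ v ∈ β ++ [w], v.2 ≠ 0) : 0 < w.2 := by
  by_contra hc
  obtain ⟨v, hv, hne⟩ := hex
  exact hne (all_zero_of_sum (nt_snd_le hp hn (by omega)) hs v hv)

lemma Valid.sum_snd_init {c d : ℕ} {α : List Pt} (h : Valid c d (α ++ [((0 : ℤ), -(d : ℤ))])) :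
    α.sum = ((c : ℤ), 0) := by
  have := h.sum
  simp only [List.sum_append, List.sum_singleton] at this
  have h1 := congrArg Prod.fst this
  have h2 := congrArg Prod.snd this
  simp at h1 h2
  ext <;> simp [h1, h2]

/-- a cut at a right turn does not produce a flat path -/
lemma cut_not_flat {c d : ℕ} {S : List Pt} {u v : Pt} {T T' : List Pt}
    (hv : Valid c d (S ++ u :: v :: T')) (hdet : det u v < 0) :
    ∃ w ∈ S ++ (u + v) :: T, w.2 ≠ 0 := by
  by_contra hc
  push Not at hc
  have hS : S.sum.2 = 0 := sum_snd_zero (fun w hw => hc w (by simp [hw]))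
  have huv := hc (u + v) (by simp)
  simp only [Prod.snd_add] at huv
  have h1 := Valid.pre_mem (S := S ++ [u]) (T := v :: T') (by simpa using hv)
  simp at h1
  have hup := hv.pos u (by simp)
  have hvp := hv.pos v (by simp)
  rw [det_def] at hdet
  unfold Pos at hup hvp
  have hu1 : 0 ≤ u.1 := by omega
  have hv1 : 0 ≤ v.1 := by omega
  have hu2 : u.2 ≤ 0 := by omega
  have hv2 : 0 ≤ v.2 := by omega
  nlinarith [mul_nonneg hu1 hv2, mul_nonneg (neg_nonneg.2 hu2) hv1]

lemma push_out {c d : ℕ} {S : List Pt} {u w : Pt} (hs : (S ++ [u, w]).sum = ((c : ℤ), -(d : ℤ)))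
    (hu : 0 < u.2) :
    ¬ Inside (rect c d) (pathFrom (0, (d : ℤ)) (S ++ w :: u :: [])) := by
  intro hin
  have := inside_iff.1 hin (S ++ [w]) [u] (by simp)
  have h2 := congrArg Prod.snd hs
  simp [rect] at this h2
  omega

lemma minus_zero {c d : ℕ} {X : Multiset ℕ} (hc : 0 < c) {σ : List Pt} {m : ℕ}
    (h : SM c d X σ m) :
    ∀ α, σ = α ++ [((0 : ℤ), -(d : ℤ))] → Valid c d σ → (∃ v ∈ α, v.2 ≠ 0) → ¬ X ≤ dn α →
      m = 0 := by
  refine SRel.ind (fun σ m => ∀ α, σ = α ++ [((0 : ℤ), -(d : ℤ))] → Valid c d σ →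
    (∃ v ∈ α, v.2 ≠ 0) → ¬ X ≤ dn α → m = 0) ?_ ?_ ?_ h
  · rintro σ h α rfl _ _ _
    obtain ⟨s, hs, e⟩ := initMinus_iff.1 h
    have := (List.append_inj' e rfl).2
    simp at this
    omega
  · intros; rfl
  · intro S u v T m' m'' hI hn hs r1 ih1 hpush α e hv hex hX
    have hu : Pos u := hv.pos u (by simp)
    have hvp : Pos v := hv.pos v (by simp)
    rcases split_last e with ⟨rfl, rfl, rfl⟩ | ⟨T, rfl, rfl⟩
    · have hsum := Valid.sum_snd_init (α := S ++ [u]) (by simpa using hv)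
      have hu2 : 0 < u.2 := last_up (fun w hw => hv.pos w (by
        simp only [List.mem_append, List.mem_cons] at hw ⊢; tauto)) hn (by rw [hsum]) hex
      have hm'' : m'' = 0 := by
        rcases hpush with ⟨hin, -⟩ | ⟨-, h0⟩
        · exact absurd hin (push_out hv.sum hu2)
        · exact h0
      have hm' : m' = 0 := by
        by_contra hne
        have h1 := minus_dn_le r1 hne hv.cut.pos
        apply hX
        refine h1.trans ?_
        rw [dn_append, dn_append]
        have := fst_add_ne hu hvp hs
        refine add_le_add_right ?_ _
        simp only [dn, if_neg this]
        simp
      rw [hm', hm'']; simp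
    · have hm' : m' = 0 := by
        refine ih1 (S ++ (u + v) :: T) (by simp) hv.cut (cut_not_flat hv hs) ?_
        intro hle
        exact hX (hle.trans (dn_cut_le (fst_add_ne hu hvp hs)))
      have hm'' : m'' = 0 := by
        rcases hpush with ⟨hin, r2, ih2⟩ | ⟨-, h0⟩
        · refine ih2 (S ++ v :: u :: T) (by simp) (hv.push hin) ?_ (by rwa [dn_swap])
          obtain ⟨w, hw, hw'⟩ := hex
          refine ⟨w, ?_, hw'⟩
          simp only [List.mem_append, List.mem_cons] at hw ⊢; tauto
        · exact h0
      rw [hm', hm'']; simp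

/-- Sum of the nondown steps. -/
def nd : List Pt → Pt
  | [] => 0
  | v :: σ => (if v.1 = 0 then 0 else v) + nd σ

lemma nd_append (S T : List Pt) : nd (S ++ T) = nd S + nd T := by
  induction S with
  | nil => simp [nd]
  | cons a S ih => simp [nd, ih, add_assoc]

lemma sum_eq_nd {S : List Pt} (hp : ∀ v ∈ S, Pos v) :
    S.sum = nd S + ((0 : ℤ), -((dn S).sum : ℤ)) := by
  induction S with
  | nil => ext <;> simp [nd, dn]
  | cons a S ih =>
    have h1 := ih (fun v hv => hp v (by simp [hv]))
    have h2 := hp a (by simp)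
    have e1 := congrArg Prod.fst h1
    have e2 := congrArg Prod.snd h1
    unfold Pos at h2
    by_cases h0 : a.1 = 0
    · ext
      · simp [nd, dn, h0] at e1 ⊢; omega
      · have habs : |a.2| = -a.2 := abs_of_neg (by omega)
        simp [nd, dn, h0, habs] at e2 ⊢; omega
    · ext
      · simp [nd, dn, h0] at e1 ⊢; omega
      · simp [nd, dn, h0] at e2 ⊢; omega

lemma nd_snd_nonneg {S : List Pt} (h : ∀ v ∈ S, v.1 ≠ 0 → 0 ≤ v.2) : 0 ≤ (nd S).2 := by
  induction S with
  | nil => simp [nd]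
  | cons a S ih =>
    have h1 := ih (fun v hv => h v (by simp [hv]))
    have h2 := h a (by simp)
    by_cases h0 : a.1 = 0
    · simp [nd, h0]; exact h1
    · have := h2 h0
      simp [nd, h0]; omega

lemma nd_snd_zero {S : List Pt} (h : ∀ v ∈ S, v.1 ≠ 0 → v.2 = 0) : (nd S).2 = 0 := by
  induction S with
  | nil => simp [nd]
  | cons a S ih =>
    have h1 := ih (fun v hv => h v (by simp [hv]))
    have h2 := h a (by simp)
    by_cases h0 : a.1 = 0
    · simp [nd, h0]; exact h1
    · have := h2 h0
      simp [nd, h0]; omega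

/-- The value of `mult₋`. -/
def Qf : Pt → List Pt → ℤ
  | _, [] => 1
  | z, v :: σ => if v.1 = 0 then Qf z σ else (-det v z) * Qf (z - v) σ

lemma Qf_append (z : Pt) (S T : List Pt) : Qf z (S ++ T) = Qf z S * Qf (z - nd S) T := by
  induction S generalizing z with
  | nil => simp [Qf, nd]
  | cons a S ih =>
    by_cases h0 : a.1 = 0
    · simp [Qf, nd, h0, ih]
    · simp [Qf, nd, h0, ih, mul_assoc, sub_sub]

lemma Qf_down {S : List Pt} (h : ∀ v ∈ S, v.1 = 0) (z : Pt) : Qf z S = 1 := by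
  induction S generalizing z with
  | nil => rfl
  | cons a S ih =>
    simp only [Qf, h a (by simp), if_true]
    exact ih (fun v hv => h v (by simp [hv])) z

lemma Qf_swap_down (z : Pt) {u v : Pt} (T : List Pt) (hv : v.1 = 0) :
    Qf z (v :: u :: T) = Qf z (u :: v :: T) := by
  simp [Qf, hv]

lemma Qf_identity (z : Pt) {u v : Pt} (T : List Pt) (hu : 0 < u.1) (hv : 0 < v.1) :
    Qf z (u :: v :: T) = (-det u v) * Qf z ((u + v) :: T) + Qf z (v :: u :: T) := by
  have huv : (u + v).1 ≠ 0 := by simp only [Prod.fst_add]; omega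
  have e1 : z - u - v = z - (u + v) := by abel
  have e2 : z - v - u = z - (u + v) := by abel
  simp only [Qf, hu.ne', hv.ne', huv, if_false, e1, e2]
  simp only [det, Prod.fst_add, Prod.snd_add, Prod.fst_sub, Prod.snd_sub]
  ring

lemma eq_dSteps {S : List Pt} (hp : ∀ v ∈ S, Pos v) (h : ∀ v ∈ S, v.1 = 0) :
    ∃ s : List ℕ, (s : Multiset ℕ) = dn S ∧ S = dSteps s := by
  induction S with
  | nil => exact ⟨[], rfl, rfl⟩
  | cons a S ih =>
    obtain ⟨s, h1, h2⟩ := ih (fun v hv => hp v (by simp [hv])) (fun v hv => h v (by simp [hv]))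
    have ha := hp a (by simp)
    have h0 := h a (by simp)
    refine ⟨a.2.natAbs :: s, ?_, ?_⟩
    · simp [dn, h0, ← h1, Multiset.singleton_add]
    · rw [dSteps_eq] at h2 ⊢
      rw [List.map_cons, ← h2]
      congr 1
      unfold Pos at ha
      ext
      · exact h0
      · have habs : |a.2| = -a.2 := abs_of_neg (by omega)
        simp [habs]

lemma minus_final {c d : ℕ} {X : Multiset ℕ} (hd : 0 < d) (hXd : X.sum = d)
    {σ : List Pt} {m : ℕ} (h : SM c d X σ m) :
    ∀ τ w, σ = τ ++ [w] → NT (fun x => x < 0) τ → Valid c d σ →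
      (∀ v ∈ τ, v.1 ≠ 0 → 0 ≤ v.2) → dn τ = X → 0 < w.1 → (m : ℤ) = Qf ((c : ℤ), 0) τ := by
  -- the position of the last step
  have hw : ∀ τ w, Valid c d (τ ++ [w]) → dn τ = X → nd τ + w = ((c : ℤ), 0) := by
    intro τ w hv hX
    have h1 := hv.sum
    rw [List.sum_append, List.sum_singleton,
      sum_eq_nd (fun v hv' => hv.pos v (by simp [hv'])), hX, hXd] at h1
    have e1 := congrArg Prod.fst h1
    have e2 := congrArg Prod.snd h1
    simp at e1 e2
    ext
    · simp; omega
    · simp; omega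
  have hQ : ∀ τ v w, Valid c d (τ ++ [v] ++ [w]) → dn (τ ++ [v]) = X → v.1 ≠ 0 →
      Qf ((c : ℤ), 0) (τ ++ [v]) = (-det v w) * Qf ((c : ℤ), 0) τ := by
    intro τ v w hv hX h0
    have h1 := hw _ _ hv hX
    rw [nd_append] at h1
    rw [Qf_append, mul_comm]
    congr 1
    have : ((c : ℤ), (0 : ℤ)) - nd τ = v + w := by
      rw [← h1]; simp [nd, h0]; abel
    rw [this]
    simp only [Qf, h0, if_false, det, Prod.fst_add, Prod.snd_add]
    ring
  have hne : ∀ τ : List Pt, dn τ = X → ∃ τ' v, τ = τ' ++ [v] := by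
    intro τ hX
    rcases List.eq_nil_or_concat τ with rfl | ⟨τ', v, rfl⟩
    · simp only [dn] at hX
      rw [← hX] at hXd; simp at hXd; omega
    · exact ⟨τ', v, by simp⟩
  have hInit : ∀ τ v w, NT (fun x => x < 0) (τ ++ [v]) → Valid c d (τ ++ [v] ++ [w]) →
      dn (τ ++ [v]) = X → v.1 = 0 →
      InitMinusRect d {c} X (pathFrom (0, (d : ℤ)) (τ ++ [v] ++ [w])) := by
    intro τ v w hn hv hX h0
    have hp : ∀ u ∈ τ ++ [v], Pos u := fun u hu => hv.pos u (by
      rw [List.mem_append]; exact Or.inl hu)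
    have hall := nt_fst_zero hp hn h0
    obtain ⟨s, h1, h2⟩ := eq_dSteps hp hall
    rw [initMinus_iff]
    refine ⟨s, by rw [h1, hX], ?_⟩
    rw [← h2]
    congr 2
    have := hw _ _ hv hX
    have hz : ∀ S : List Pt, (∀ v ∈ S, v.1 = 0) → nd S = 0 := by
      intro S
      induction S with
      | nil => simp [nd]
      | cons a S ih => intro h; simp [nd, h a (by simp), ih (fun v hv => h v (by simp [hv]))]
    rw [hz _ hall, zero_add] at this
    exact this
  refine SRel.ind (fun σ m => ∀ τ w, σ = τ ++ [w] → NT (fun x => x < 0) τ → Valid c d σ →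
      (∀ v ∈ τ, v.1 ≠ 0 → 0 ≤ v.2) → dn τ = X → 0 < w.1 →
      (m : ℤ) = Qf ((c : ℤ), 0) τ) ?_ ?_ ?_ h
  · rintro σ h τ w rfl hn hv h2 hX hw1
    obtain ⟨s, hs, e⟩ := initMinus_iff.1 h
    have h1 := (List.append_inj' e rfl).1
    rw [Qf_down]; · simp
    rw [h1, dSteps_eq]
    intro v hv
    simp at hv
    obtain ⟨a, -, rfl⟩ := hv
    rfl
  · rintro σ hI hnt τ w rfl hn hv h2 hX hw1
    obtain ⟨τ, v, rfl⟩ := hne τ hX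
    by_cases h0 : v.1 = 0
    · exact absurd (hInit _ _ _ hn hv hX h0) hI
    · rw [hQ _ _ _ hv hX h0]
      have h3 := hnt τ v w [] (by simp)
      have h4 := h2 v (by simp) h0
      have h5 := congrArg Prod.snd (hw _ _ hv hX)
      have h6 := nd_snd_nonneg h2
      simp only [Prod.snd_add] at h5
      have hvp : Pos v := hv.pos v (by simp)
      unfold Pos at hvp
      have : det v w = 0 := by
        rw [det_def] at h3 ⊢
        have a1 : 0 < v.1 := by omega
        have a2 : w.2 ≤ 0 := by omega
        nlinarith
      rw [this]; simp
  · intro S u v T m' m'' hI hnS hs r1 ih1 hpush τ w e hn hv h2 hX hw1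
    rcases split_last e with ⟨rfl, rfl, rfl⟩ | ⟨T, rfl, rfl⟩
    · by_cases h0 : u.1 = 0
      · exact absurd (hInit _ _ _ hn (by simpa using hv) hX h0) (by simpa using hI)
      have hv' : Valid c d (S ++ [u] ++ [v]) := by simpa using hv
      have hup : Pos u := hv.pos u (by simp)
      have hvp : Pos v := hv.pos v (by simp)
      have hu2 : 0 ≤ u.2 := h2 u (by simp) h0
      have hu2' : 0 < u.2 := by
        by_contra hc'
        have hle := nt_snd_le (fun w hw => hv'.pos w (by
          rw [List.mem_append]; exact Or.inl hw)) hnS (by omega)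
        have h3 := nd_snd_zero (S := S ++ [u]) (fun w hw hw0 => le_antisymm (hle w hw) (h2 w hw hw0))
        have h5 := congrArg Prod.snd (hw _ _ hv' hX)
        simp only [Prod.snd_add] at h5
        have a1 : v.2 = 0 := by omega
        have a2 : u.2 = 0 := by omega
        rw [det_def, a1, a2] at hs
        simp at hs
      have hm'' : m'' = 0 := by
        rcases hpush with ⟨hin, -⟩ | ⟨-, h0⟩
        · exact absurd hin (push_out hv.sum hu2')
        · exact h0
      have hdnS : dn S = X := by
        rw [← hX, dn_append]; simp [dn, h0]
      have hval := ih1 S (u + v) rfl hn.pre hv.cut (fun w hw => h2 w (by simp [hw])) hdnS (by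
        unfold Pos at hup
        simp only [Prod.fst_add]; omega)
      rw [hQ _ _ _ hv' hX h0, hm'', ← hval]
      push_cast
      rw [abs_of_neg hs]; ring
    · exact absurd hs (hn S u v T rfl)

lemma minus_eval {c d : ℕ} {X : Multiset ℕ} (hc : 0 < c) (hd : 0 < d) (hXd : X.sum = d)
    {σ : List Pt} {m : ℕ} (h : SM c d X σ m) :
    ∀ α, σ = α ++ [((0 : ℤ), -(d : ℤ))] → Valid c d σ →
      (∀ v ∈ α, v.1 ≠ 0 → 0 ≤ v.2) → dn α = X → (m : ℤ) = Qf ((c : ℤ), 0) α := by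
  refine SRel.ind (fun σ m => ∀ α, σ = α ++ [((0 : ℤ), -(d : ℤ))] → Valid c d σ →
      (∀ v ∈ α, v.1 ≠ 0 → 0 ≤ v.2) → dn α = X → (m : ℤ) = Qf ((c : ℤ), 0) α) ?_ ?_ ?_ h
  · rintro σ h α rfl _ _ _
    obtain ⟨s, hs, e⟩ := initMinus_iff.1 h
    have := (List.append_inj' e rfl).2
    simp at this
    omega
  · rintro σ hI hnt α rfl hv h2 hX
    exfalso
    have h1 := sum_fst_zero (nt_fst_zero hv.pos hnt rfl)
    rw [hv.sum] at h1
    simp at h1; omega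
  · intro S u v T m' m'' hI hnS hs r1 ih1 hpush α e hv h2 hX
    have hup : Pos u := hv.pos u (by simp)
    have hvp : Pos v := hv.pos v (by simp)
    have hu1 : 0 < u.1 := by
      by_contra hc'
      unfold Pos at hup hvp
      have a0 : u.1 = 0 := by omega
      have a1 : u.2 < 0 := by omega
      have a2 : 0 ≤ v.1 := by omega
      rw [det_def, a0] at hs
      nlinarith
    rcases split_last e with ⟨rfl, rfl, rfl⟩ | ⟨T, rfl, rfl⟩
    · have hsum := Valid.sum_snd_init (α := S ++ [u]) (by simpa using hv)
      have hpα : ∀ w ∈ S ++ [u], Pos w := fun w hw => hv.pos w (by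
        simp only [List.mem_append, List.mem_cons] at hw ⊢; tauto)
      have hnd := sum_eq_nd hpα
      rw [hsum, hX, hXd] at hnd
      have hu2 : 0 < u.2 := by
        refine last_up hpα hnS (by rw [hsum]) ?_
        by_contra hc'
        push Not at hc'
        have := nd_snd_zero (S := S ++ [u]) (fun w hw _ => hc' w hw)
        have h5 := congrArg Prod.snd hnd
        simp only [Prod.snd_add, this] at h5
        omega
      have hm'' : m'' = 0 := by
        rcases hpush with ⟨hin, -⟩ | ⟨-, h0⟩
        · exact absurd hin (push_out hv.sum hu2)
        · exact h0
      have hdnS : dn S = X := by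
        rw [← hX, dn_append]; simp [dn, hu1.ne']
      have hval := minus_final hd hXd r1 S _ rfl hnS.pre hv.cut
        (fun w hw => h2 w (by simp [hw])) hdnS (by simpa using hu1)
      rw [Qf_append, ← hval, hm'']
      have hz : ((c : ℤ), (0 : ℤ)) - nd S = u + ((0 : ℤ), -(d : ℤ)) := by
        rw [hnd, nd_append]
        simp [nd, hu1.ne']
        abel
      rw [hz]
      simp only [Qf, hu1.ne', if_false]
      push_cast
      rw [abs_of_neg hs]
      simp only [det, Prod.fst_add, Prod.snd_add]
      ring
    · have hz1 : ((0 : ℤ), (d : ℤ)) + S.sum + v ∈ rect c d → (m'' : ℤ) = Qf ((c : ℤ), 0)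
          (S ++ v :: u :: T) := by
        intro hin'
        have hin := inside_push hv.inside hin'
        rcases hpush with ⟨hin, r2, ih2⟩ | ⟨hin', h0⟩
        · refine ih2 (S ++ v :: u :: T) (by simp) (hv.push hin) ?_ (by rwa [dn_swap])
          intro w hw
          apply h2
          simp only [List.mem_append, List.mem_cons] at hw ⊢; tauto
        · exact absurd hin hin'
      have hm0 := hv.pre_mem
      have hm1 := Valid.pre_mem (S := S ++ [u, v]) (T := T ++ [((0 : ℤ), -(d : ℤ))])
        (by simpa using hv)
      simp only [List.sum_append, List.sum_cons, List.sum_nil, Prod.fst_add, Prod.snd_add,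
        add_zero] at hm1
      have hS := sum_eq_nd (S := S) (fun w hw => hv.pos w (by simp [hw]))
      have hSnd := nd_snd_nonneg (S := S) (fun w hw => h2 w (by simp [hw]))
      have hS2 := congrArg Prod.snd hS
      simp only [Prod.snd_add] at hS2
      have hdsum := congrArg Multiset.sum hX
      simp only [dn_append, dn, hu1.ne', if_false, Multiset.sum_add, hXd, Multiset.sum_zero]
        at hdsum
      by_cases hv1 : v.1 = 0
      · have hm' : m' = 0 := by
          refine minus_zero hc r1 (S ++ (u + v) :: T) (by simp) hv.cut (cut_not_flat hv hs) ?_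
          intro hle
          rw [← hX] at hle
          have := Multiset.card_le_card hle
          have hne : u.1 + v.1 ≠ 0 := by omega
          simp [dn_append, dn, hu1.ne', hv1] at this
        simp only [hv1, if_true, Multiset.sum_singleton] at hdsum
        have hv2 : v.2 < 0 := by unfold Pos at hvp; omega
        rw [hm', mul_zero, zero_add, hz1, Qf_append, Qf_append, Qf_swap_down _ _ hv1]
        simp only [rect, Set.mem_ofPred_eq, Prod.fst_add, Prod.snd_add]
        omega
      · have hv1' : 0 < v.1 := by unfold Pos at hvp; omega
        have hu2 := h2 u (by simp) hu1.ne'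
        have hv2 := h2 v (by simp) hv1
        have hne : (u + v).1 ≠ 0 := by simp only [Prod.fst_add]; omega
        have hval := ih1 (S ++ (u + v) :: T) (by simp) hv.cut (by
          intro w hw
          simp only [List.mem_append, List.mem_cons] at hw
          rcases hw with hw | rfl | hw
          · exact h2 w (by simp [hw])
          · intro _; simp only [Prod.snd_add]; omega
          · exact h2 w (by simp [hw])) (by
          rw [← hX]
          simp only [dn_append, dn, hu1.ne', hv1, hne, if_false, zero_add])
        have hpv := hz1 (by
          simp only [rect, Set.mem_ofPred_eq, Prod.fst_add, Prod.snd_add]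
          simp only [hv1, if_false, Multiset.sum_zero] at hdsum
          omega)
        push_cast
        rw [hval, hpv, abs_of_neg hs, Qf_append, Qf_append, Qf_append, Qf_identity _ _ hu1 hv1']
        ring

/-! ## Part 4: assembly -/

section Words

variable {n : ℕ}

/-- The multiset of the entries of `x`. -/
def XM (x : Fin n → ℕ) : Multiset ℕ := (Finset.univ : Finset (Fin n)).val.map x

lemma coe_ofFn_eq (x : Fin n → ℕ) : ((List.ofFn x : List ℕ) : Multiset ℕ) = XM x := by
  rw [List.ofFn_eq_map, ← Multiset.map_coe]
  rfl

lemma XM_sum (x : Fin n → ℕ) : (XM x).sum = ∑ i, x i := rfl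

lemma XM_prod (x : Fin n → ℕ) : (XM x).prod = ∏ i, x i := rfl

lemma XM_card (x : Fin n → ℕ) : (XM x).card = n := by simp [XM]

lemma Generic.inj {x : Fin n → ℕ} (h : Generic x) : Function.Injective x := by
  intro i j hij
  by_contra hne
  exact h {i} {j} (by simpa using hne) (by simpa using hij)

lemma le_XM {x : Fin n → ℕ} (h : Function.Injective x) {M : Multiset ℕ} (hM : M ≤ XM x) :
    ∃ I : Finset (Fin n), M = I.val.map x := by
  refine ⟨Finset.univ.filter (fun i => x i ∈ M), ?_⟩
  have hnX : (XM x).Nodup := Multiset.Nodup.map h Finset.univ.nodup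
  refine (Multiset.Nodup.ext (Multiset.nodup_of_le hM hnX)
    (Multiset.Nodup.map h (Finset.nodup _))).2 ?_
  intro a
  constructor
  · intro ha
    have := Multiset.mem_of_le hM ha
    obtain ⟨i, hi, rfl⟩ := Multiset.mem_map.1 this
    exact Multiset.mem_map.2 ⟨i, by simpa using ha, rfl⟩
  · intro ha
    obtain ⟨i, hi, rfl⟩ := Multiset.mem_map.1 ha
    simpa using hi

lemma genM_XM {x : Fin n → ℕ} (hx : ∀ i, 0 < x i) (h : Generic x) : GenM (XM x) := by
  refine ⟨Multiset.Nodup.map h.inj Finset.univ.nodup, ?_, ?_⟩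
  · intro M M' hM hM' hs
    obtain ⟨I, rfl⟩ := le_XM h.inj hM
    obtain ⟨J, rfl⟩ := le_XM h.inj hM'
    by_contra hne
    exact h I J (by rintro rfl; exact hne rfl) hs
  · intro b hb
    obtain ⟨i, -, rfl⟩ := Multiset.mem_map.1 hb
    exact hx i

/-- Symbols: a down step (labelled by an index) or an up step (labelled by a subset). -/
abbrev Sy (n : ℕ) := Fin n ⊕ Finset (Fin n)

/-- The step vector of a symbol. -/
def stepOf (x : Fin n → ℕ) : Sy n → Pt
  | Sum.inl j => ((0 : ℤ), -(x j : ℤ))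
  | Sum.inr A => ((1 : ℤ), ((∑ i ∈ A, x i : ℕ) : ℤ))

lemma stepOf_inj {x : Fin n → ℕ} (h : Generic x) : Function.Injective (stepOf x) := by
  rintro (j | A) (k | B) e
  · simp only [stepOf, Prod.mk.injEq, neg_inj, Nat.cast_inj, true_and] at e
    rw [h.inj e]
  · simp [stepOf] at e
  · simp [stepOf] at e
  · simp only [stepOf, Prod.mk.injEq, Nat.cast_inj, true_and] at e
    by_contra hne
    exact h A B (fun hh => hne (by rw [hh])) e

/-- The machine on words. -/
def OkW : List (Sy n) → Finset (Fin n) → Finset (Fin n) → Prop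
  | [], P, Q => P = Q
  | Sum.inl j :: w, P, Q => j ∉ P ∧ OkW w (insert j P) Q
  | Sum.inr A :: w, P, Q => A ⊆ P ∧ OkW w (P \ A) Q

/-- The down labels of a word. -/
def lf : List (Sy n) → Multiset (Fin n)
  | [] => 0
  | Sum.inl j :: w => j ::ₘ lf w
  | Sum.inr _ :: w => lf w

lemma dn_map {x : Fin n → ℕ} (w : List (Sy n)) : dn (w.map (stepOf x)) = (lf w).map x := by
  induction w with
  | nil => rfl
  | cons a w ih =>
    rcases a with j | A
    · simp [dn, stepOf, lf, ih, Multiset.singleton_add]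
    · simp [dn, stepOf, lf, ih]

lemma run_map {x : Fin n → ℕ} (hx : ∀ i, 0 < x i) {w : List (Sy n)} {I J : Finset (Fin n)}
    (h : OkW w I J) : Run (w.map (stepOf x)) (I.val.map x) (J.val.map x) := by
  induction w generalizing I with
  | nil => simp only [OkW] at h; simp [Run, h]
  | cons a w ih =>
    rcases a with j | A
    · obtain ⟨h1, h2⟩ := h
      refine Or.inl ⟨rfl, x j, hx j, rfl, ?_⟩
      have := ih h2
      rwa [Finset.insert_val_of_notMem h1, Multiset.map_cons] at this
    · obtain ⟨h1, h2⟩ := h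
      refine Or.inr ⟨rfl, A.val.map x, (I \ A).val.map x, ?_, rfl, ih h2⟩
      rw [← Multiset.map_add, Finset.sdiff_val,
        add_tsub_cancel_of_le (Finset.val_le_iff.2 h1)]

lemma run_lift {x : Fin n → ℕ} (hx : Function.Injective x) {α : List Pt} {I : Finset (Fin n)}
    {Q : Multiset ℕ} (h : Run α (I.val.map x) Q) (hle : I.val.map x + dn α ≤ XM x) :
    ∃ (w : List (Sy n)) (J : Finset (Fin n)), α = w.map (stepOf x) ∧ Q = J.val.map x ∧
      OkW w I J := by
  induction α generalizing I with
  | nil => exact ⟨[], I, rfl, h.symm, rfl⟩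
  | cons a σ ih =>
    have hnX : (XM x).Nodup := Multiset.Nodup.map hx Finset.univ.nodup
    rcases h with ⟨h, b, hb, e, h1⟩ | ⟨h, M, P', eP, e, h1⟩
    · have hle2 : (b ::ₘ I.val.map x) + dn σ ≤ XM x := by
        simp only [dn, h, e] at hle
        simpa [Multiset.cons_add, Multiset.singleton_add, Multiset.add_cons] using hle
      have hle3 := (Multiset.le_add_right _ _).trans hle2
      have hbX : b ∈ XM x := Multiset.mem_of_le hle3 (Multiset.mem_cons_self _ _)
      obtain ⟨j, -, rfl⟩ := Multiset.mem_map.1 hbX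
      have hj : j ∉ I := by
        intro hj
        have := (Multiset.nodup_cons.1 (Multiset.nodup_of_le hle3 hnX)).1
        exact this (Multiset.mem_map.2 ⟨j, hj, rfl⟩)
      have e2 : (x j) ::ₘ I.val.map x = (insert j I).val.map x := by
        rw [Finset.insert_val_of_notMem hj, Multiset.map_cons]
      rw [e2] at h1 hle2
      obtain ⟨w, J, i1, i2, i3⟩ := ih h1 hle2
      refine ⟨Sum.inl j :: w, J, ?_, i2, hj, i3⟩
      rw [List.map_cons, ← i1]
      congr 1
      ext
      · exact h
      · exact e
    · have hle2 : I.val.map x + dn σ ≤ XM x := by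
        simp only [dn, h] at hle
        simpa using hle
      have hI : I.val.map x ≤ XM x := (Multiset.le_add_right _ _).trans hle2
      obtain ⟨A, rfl⟩ := le_XM hx (le_trans (by rw [eP]; exact Multiset.le_add_right _ _) hI :
        M ≤ XM x)
      obtain ⟨B, rfl⟩ := le_XM hx (le_trans (by rw [eP]; exact Multiset.le_add_left _ _) hI :
        P' ≤ XM x)
      rw [← Multiset.map_add] at eP
      have eI := Multiset.map_injective hx eP
      have hA : A ⊆ I := Finset.val_le_iff.1 (by rw [eI]; exact Multiset.le_add_right _ _)
      have hB : B = I \ A := by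
        apply Finset.val_injective
        rw [Finset.sdiff_val, eI, add_tsub_cancel_left]
      rw [hB] at h1
      obtain ⟨w, J, i1, i2, i3⟩ := ih h1 (le_trans (add_le_add_left
        (Multiset.map_le_map (Finset.val_le_iff.2 Finset.sdiff_subset)) _) hle2)
      refine ⟨Sum.inr A :: w, J, ?_, i2, hA, i3⟩
      rw [List.map_cons, ← i1]
      congr 1
      ext
      · exact h
      · exact e

/-- The set of words. -/
def WS (n c : ℕ) : Set (List (Sy n)) :=
  {w | w.length = n + c ∧ OkW w ∅ ∅ ∧ lf w = Finset.univ.val}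

lemma WS_finite (n c : ℕ) : (WS n c).Finite :=
  (List.finite_length_eq (Sy n) (n + c)).subset (fun _ h => h.1)

/-- Good step lists. -/
def GoodL (c : ℕ) (x : Fin n → ℕ) (α : List Pt) : Prop :=
  Run α 0 0 ∧ dn α = XM x ∧ α.length = n + c

lemma goodL_iff {c : ℕ} {x : Fin n → ℕ} (hx : ∀ i, 0 < x i) (h : Generic x) (α : List Pt) :
    GoodL c x α ↔ ∃ w ∈ WS n c, α = w.map (stepOf x) := by
  constructor
  · rintro ⟨h1, h2, h3⟩
    obtain ⟨w, J, i1, i2, i3⟩ := run_lift (I := ∅) h.inj (by simpa using h1) (by simp [h2])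
    refine ⟨w, ⟨by rw [← h3, i1, List.length_map], ?_, ?_⟩, i1⟩
    · have : J = ∅ := by
        have hJ := i2.symm
        rw [Multiset.map_eq_zero] at hJ
        exact Finset.val_eq_zero.1 hJ
      rwa [this] at i3
    · rw [i1, dn_map] at h2
      exact Multiset.map_injective h.inj h2
  · rintro ⟨w, ⟨h1, h2, h3⟩, rfl⟩
    refine ⟨by simpa using run_map hx h2, ?_, by simpa using h1⟩
    rw [dn_map, h3]; rfl

/-- The multiplicity of a word over a commutative ring. -/
def QW {R : Type*} [CommRing R] (y : Fin n → R) : R × R → List (Sy n) → R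
  | _, [] => 1
  | z, Sum.inl _ :: w => QW y z w
  | z, Sum.inr A :: w =>
    (-(z.2 - (∑ i ∈ A, y i) * z.1)) * QW y (z.1 - 1, z.2 - ∑ i ∈ A, y i) w

lemma QW_hom {R S : Type*} [CommRing R] [CommRing S] (f : R →+* S) (y : Fin n → R) (z : R × R)
    (w : List (Sy n)) : f (QW y z w) = QW (fun i => f (y i)) (f z.1, f z.2) w := by
  induction w generalizing z with
  | nil => simp [QW]
  | cons a w ih =>
    rcases a with j | A
    · simp [QW, ih]
    · simp [QW, ih]

lemma Qf_map {x : Fin n → ℕ} (w : List (Sy n)) (z : Pt) :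
    Qf z (w.map (stepOf x)) = QW (fun i => (x i : ℤ)) z w := by
  induction w generalizing z with
  | nil => rfl
  | cons a w ih =>
    rcases a with j | A
    · simp [Qf, QW, stepOf, ih]
    · have e : z - stepOf x (Sum.inr A) = (z.1 - 1, z.2 - ∑ i ∈ A, (x i : ℤ)) := by
        ext <;> simp [stepOf]
      rw [List.map_cons, Qf, e, if_neg (by simp [stepOf]), ih (z.1 - 1, _), QW]
      simp [stepOf, det]

end Words

lemma sum_fst_card {S : List Pt} (h : ∀ v ∈ S, (v.1 = 0 ∧ v.2 < 0) ∨ (v.1 = 1 ∧ 0 ≤ v.2)) :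
    S.sum.1 + (dn S).card = S.length := by
  induction S with
  | nil => simp [dn]
  | cons a S ih =>
    have h1 := ih (fun v hv => h v (by simp [hv]))
    rcases h a (by simp) with h2 | h2
    · simp [dn, h2.1]; omega
    · simp [dn, h2.1]; omega

lemma run_card {S : List Pt} {P Q : Multiset ℕ} (h : Run S P Q) (hs : S.sum.1 = 0) :
    Q.card = P.card + S.length := by
  induction S generalizing P with
  | nil => simp only [Run] at h; simp [h]
  | cons a S ih =>
    rcases h with ⟨h, b, hb, e, h1⟩ | ⟨h, M, P', rfl, e', h1⟩
    · have := ih h1 (by simpa [h] using hs)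
      rw [this]; simp; omega
    · exfalso
      have h2 := sum_fst_nonneg (S := S) (fun v hv => by
        have := run_step h1 v hv
        unfold Pos; omega)
      simp only [List.sum_cons, Prod.fst_add] at hs
      omega

lemma exists_steps (p : Pt) (L : List Pt) (h : Increasing (p :: L)) :
    ∃ σ, p :: L = pathFrom p σ ∧ ∀ v ∈ σ, Pos v := by
  induction L generalizing p with
  | nil => exact ⟨[], rfl, by simp⟩
  | cons q L ih =>
    unfold Increasing at h
    rw [List.Chain', List.isChain_cons_cons] at h
    obtain ⟨σ, h1, h2⟩ := ih q h.2
    refine ⟨(q - p) :: σ, ?_, ?_⟩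
    · simp only [pathFrom]
      rw [add_sub_cancel, ← h1]
    · intro v hv
      rcases List.mem_cons.1 hv with rfl | hv
      · have := h.1
        unfold lamLT at this
        simp only [Pos, Prod.fst_sub, Prod.snd_sub]
        omega
      · exact h2 v hv

lemma increasing_path (p : Pt) (σ : List Pt) (h : ∀ v ∈ σ, Pos v) :
    Increasing (pathFrom p σ) := by
  unfold Increasing
  induction σ generalizing p with
  | nil => simp [pathFrom, List.Chain']
  | cons a σ ih =>
    have h1 := ih (p + a) (fun v hv => h v (by simp [hv]))
    obtain ⟨L, hL⟩ := pathFrom_head (p + a) σ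
    simp only [pathFrom]
    rw [hL] at h1 ⊢
    rw [List.Chain', List.isChain_cons_cons]
    refine ⟨?_, h1⟩
    have := h a (by simp)
    unfold Pos at this
    simp only [lamLT, Prod.fst_add, Prod.snd_add]
    omega

lemma isPathRect_iff {c d : ℕ} {γ : List Pt} :
    IsPathRect c d γ ↔ ∃ σ, γ = pathFrom (0, (d : ℤ)) σ ∧ Valid c d σ := by
  constructor
  · rintro ⟨h1, h2, h3, h4⟩
    cases γ with
    | nil => simp at h2
    | cons p L =>
      simp only [List.head?_cons, Option.some.injEq] at h2
      subst h2
      obtain ⟨σ, e, hp⟩ := exists_steps _ _ h1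
      refine ⟨σ, e, hp, ?_, by rwa [← e]⟩
      rw [e] at h3
      obtain ⟨L', hL⟩ := pathFrom_last (0, (d : ℤ)) σ
      rw [hL] at h3
      simp only [List.getLast?_append, List.getLast?_singleton, Option.some_or,
        Option.some.injEq] at h3
      have e1 := congrArg Prod.fst h3
      have e2 := congrArg Prod.snd h3
      simp at e1 e2
      ext
      · simp; omega
      · simp; omega
  · rintro ⟨σ, rfl, hv⟩
    refine ⟨increasing_path _ _ hv.pos, ?_, ?_, hv.inside⟩
    · obtain ⟨L, hL⟩ := pathFrom_head (0, (d : ℤ)) σ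
      rw [hL]; rfl
    · obtain ⟨L', hL⟩ := pathFrom_last (0, (d : ℤ)) σ
      rw [hL, hv.sum]
      simp

/-- The path of a good step list. -/
def goodPath (d : ℕ) (α : List Pt) : List Pt :=
  pathFrom (0, (d : ℤ)) (α ++ [((0 : ℤ), -(d : ℤ))])

section Final

variable {n c : ℕ} {x : Fin n → ℕ}

lemma good_valid {d : ℕ} (hdx : d = ∑ i, x i) (hd : 0 < d) {α : List Pt} (h : GoodL c x α) :
    Valid c d (α ++ [((0 : ℤ), -(d : ℤ))]) := by
  obtain ⟨h1, h2, h3⟩ := h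
  have hst := run_step h1
  have hp : ∀ v ∈ α, Pos v := fun v hv => by
    have := hst v hv
    unfold Pos; omega
  have hs1 := sum_fst_card hst
  have hs2 := run_sum h1
  rw [h2, XM_card, h3] at hs1
  have hsum : α.sum = ((c : ℤ), 0) := by
    ext
    · simp at hs1 ⊢; omega
    · simp at hs2 ⊢; omega
  refine ⟨?_, ?_, run_inside (by rw [XM_sum, hdx]) h1 h2.le hp hsum⟩
  · intro v hv
    rw [List.mem_append, List.mem_singleton] at hv
    rcases hv with hv | rfl
    · exact hp v hv
    · right; simpa using hd
  · simp [hsum]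

lemma plus_SP {c d : ℕ} {σ : List Pt} (hv : Valid c d σ) :
    SP c d σ (multPlusRect c d (Multiset.replicate c 1) {d} (pathFrom (0, (d : ℤ)) σ)) :=
  multOf_eq 1 (fun t ht => by simpa using ht) _ _ hv.inside

lemma minus_SM {c d : ℕ} {X : Multiset ℕ} {σ : List Pt} (hv : Valid c d σ) :
    SM c d X σ (multMinusRect c d {c} X (pathFrom (0, (d : ℤ)) σ)) :=
  multOf_eq (-1) (fun t ht => by
    have : t < 0 := ht
    omega) _ _ hv.inside

lemma good_value (hc : 0 < c) {d : ℕ} (hdx : d = ∑ i, x i) (hd : 0 < d) (hx : ∀ i, 0 < x i)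
    (hg : Generic x) {α : List Pt} (h : GoodL c x α) :
    (multRect c d {c} (Multiset.replicate c 1) (XM x) {d} (goodPath d α) : ℤ) =
      (∏ i, (x i : ℤ)) * Qf ((c : ℤ), 0) α := by
  have hv := good_valid hdx hd h
  have hX := genM_XM hx hg
  have hXd : (XM x).sum = d := by rw [XM_sum, hdx]
  have e1 := plus_eval hd hX hXd (plus_SP hv) α rfl hv h.1 h.2.1.le
  have e2 := minus_eval hc hd hXd (minus_SM hv) α rfl hv (fun v hv' h0 => by
    have := run_step h.1 v hv'
    omega) h.2.1
  rw [multRect, goodPath, Nat.cast_mul, e1, e2, h.2.1, XM_prod]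
  push_cast
  rfl

lemma good_of_ne (hc : 0 < c) (hn : 0 < n) {d : ℕ} (hdx : d = ∑ i, x i) (hd : 0 < d)
    {γ : List Pt} (hγ : IsPathRect c d γ) (hl : γ.length = n + c + 2)
    (hm : multRect c d {c} (Multiset.replicate c 1) (XM x) {d} γ ≠ 0) :
    ∃ α, GoodL c x α ∧ γ = goodPath d α := by
  obtain ⟨σ, rfl, hv⟩ := isPathRect_iff.1 hγ
  rw [length_pathFrom] at hl
  rw [multRect] at hm
  have hm1 := left_ne_zero_of_mul hm
  have hm2 := right_ne_zero_of_mul hm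
  have hrun := run_of_plus hd (plus_SP hv) hm1 hv.pos
  have hSM := minus_SM (X := XM x) hv
  rcases List.eq_nil_or_concat σ with rfl | ⟨α, w, rfl⟩
  · simp at hl
  rw [List.concat_eq_append] at *
  rw [run_append] at hrun
  obtain ⟨P, h1, h2⟩ := hrun
  have hst := run_step h1
  have hs1 := sum_fst_card hst
  have hs2 := run_sum h1
  have hsum := hv.sum
  rw [List.sum_append, List.sum_singleton] at hsum
  have hsum1 := congrArg Prod.fst hsum
  have hsum2 := congrArg Prod.snd hsum
  simp only [Prod.fst_add, Prod.snd_add] at hsum1 hsum2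
  simp only [List.length_append, List.length_singleton] at hl
  rcases h2 with ⟨h, b, hb, e, h2⟩ | ⟨h, M, P', eP, e, h2⟩
  · simp only [Run] at h2
    have hP : P = 0 ∧ b = d := by
      have hcard := congrArg Multiset.card h2
      simp at hcard
      subst hcard
      simpa using h2
    obtain ⟨rfl, rfl⟩ := hP
    have hw : w = ((0 : ℤ), -(b : ℤ)) := by ext; exacts [h, e]
    subst hw
    have hcard : (dn α).card = n := by
      omega
    have hXle : XM x ≤ dn α := by
      by_contra hX
      refine hm2 (minus_zero hc hSM α rfl hv ?_ hX)
      by_contra hall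
      push Not at hall
      have := (run_zero_nodown h1 (fun v hv' h0 => by
        have a1 := hst v hv'
        have a2 := hall v hv'
        omega)).2
      rw [this] at hcard
      simp at hcard; omega
    refine ⟨α, ⟨h1, ?_, by omega⟩, rfl⟩
    exact (Multiset.eq_of_le_of_card_le hXle (by rw [XM_card, hcard])).symm
  · exfalso
    simp only [Run] at h2
    subst h2
    have hpre := hv.pre_mem
    have hPs : (P.sum : ℤ) = M.sum + d := by rw [eP]; simp
    simp only [Multiset.sum_zero, Nat.cast_zero] at hs2
    have hM0 : M.sum = 0 := by omega
    have hM : M = 0 := by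
      rw [Multiset.eq_zero_iff_forall_notMem]
      intro a ha
      have hpos := run_posQ h1 (by simp) a (by rw [eP]; simp [ha])
      have := Multiset.single_le_sum (fun _ _ => Nat.zero_le _) a ha
      omega
    have hw : w = ((1 : ℤ), (0 : ℤ)) := by
      ext
      · exact h
      · rw [e, hM0]; rfl
    subst hw
    have hc1 := minus_last hSM hm2 hv α 1 rfl
    have := run_card h1 (by simp at hsum1; omega)
    rw [eP, hM] at this
    simp at this
    omega

end Final

/-- The count `N_rect(x₁,…,xₙ)` of lattice paths (with multiplicity) in
the rectangle with boundary data `μ₁ = (c)`, `μ₂ = (1,…,1)`, `ν₁ = (x₁,…,xₙ)`, `ν₂ = (d)`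
is given by a single polynomial for all generic positive `x₁,…,xₙ`. -/
theorem Nrect_polynomial (c n : ℕ) (hc : 0 < c) (hn : 0 < n) :
    ∃ P : MvPolynomial (Fin n) ℚ,
      ∀ x : Fin n → ℕ, (∀ i, 0 < x i) → Generic x →
        ((∑ᶠ γ ∈ {γ : List Pt | IsPathRect c (∑ i, x i) γ ∧ γ.length = n + c + 2},
            multRect c (∑ i, x i) {c} (Multiset.replicate c 1)
              ((List.ofFn x : List ℕ) : Multiset ℕ) {∑ i, x i} γ : ℕ) : ℚ)
          = MvPolynomial.eval (fun i => ((x i : ℚ))) P := by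
  let y : Fin n → MvPolynomial (Fin n) ℚ := fun i => MvPolynomial.X i
  let W : Finset (List (Sy n)) := (WS_finite n c).toFinset
  refine ⟨∑ w ∈ W, (∏ i, y i) * QW y ((c : MvPolynomial (Fin n) ℚ), 0) w, ?_⟩
  intro x hx hg
  rw [coe_ofFn_eq]
  obtain ⟨d, hdx⟩ : ∃ d, d = ∑ i, x i := ⟨_, rfl⟩
  rw [← hdx]
  have hd : 0 < d := by
    rw [hdx]
    exact Finset.sum_pos (fun i _ => hx i) ⟨⟨0, hn⟩, Finset.mem_univ _⟩
  have key : (∑ᶠ γ ∈ {γ : List Pt | IsPathRect c d γ ∧ γ.length = n + c + 2},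
      multRect c d {c} (Multiset.replicate c 1) (XM x) {d} γ) =
      ∑ γ ∈ W.image (fun w => goodPath d (w.map (stepOf x))),
        multRect c d {c} (Multiset.replicate c 1) (XM x) {d} γ := by
    apply finsum_mem_eq_sum_of_inter_support_eq
    ext γ
    simp only [Set.mem_inter_iff, Set.mem_ofPred_eq, Function.mem_support, Finset.coe_image,
      Set.mem_image, Finset.mem_coe]
    constructor
    · rintro ⟨⟨h1, h2⟩, h3⟩
      refine ⟨?_, h3⟩
      obtain ⟨α, hα, rfl⟩ := good_of_ne hc hn hdx hd h1 h2 h3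
      obtain ⟨w, hw, rfl⟩ := (goodL_iff hx hg α).1 hα
      exact ⟨w, by simpa [W] using hw, rfl⟩
    · rintro ⟨⟨w, hw, rfl⟩, h3⟩
      refine ⟨?_, h3⟩
      have hα : GoodL c x (w.map (stepOf x)) :=
        (goodL_iff hx hg _).2 ⟨w, by simpa [W] using hw, rfl⟩
      refine ⟨isPathRect_iff.2 ⟨_, rfl, good_valid hdx hd hα⟩, ?_⟩
      rw [goodPath, length_pathFrom, List.length_append, hα.2.2]
      rfl
  rw [key, Finset.sum_image]
  · rw [map_sum, Nat.cast_sum]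
    refine Finset.sum_congr rfl ?_
    intro w hw
    have hα : GoodL c x (w.map (stepOf x)) :=
      (goodL_iff hx hg _).2 ⟨w, by simpa [W] using hw, rfl⟩
    have hval := good_value hc hdx hd hx hg hα
    rw [Qf_map] at hval
    have hq := congrArg (Int.castRingHom ℚ) hval
    rw [map_mul, QW_hom] at hq
    rw [map_mul, QW_hom]
    simpa [y] using hq
  · intro w hw w' hw' e
    have e1 := pathFrom_inj _ _ _ e
    have e2 := List.append_cancel_right e1
    exact List.map_injective_iff.2 (stepOf_inj hg) e2

end TropPaths
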